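/- Fix k ∈ {1,…,p−1}. Suppose that almost surely U^{-(k−1)} (U^{-(k−1)})ᵀ B V^{-(k−1)} (V^{-(k−1)})ᵀ = 0_{N×p} (the null hypothesis H_{0,k}). Then the integrated conditional singular value statistic V_{k,0} = (∫_{d_k}^{d_{k−1}} g(y; d₁,…,d_{k−1}) dy) / (∫_{0}^{d_{k−1}} g(y; d₁,…,d_{k−1}) dy) is uniformly distributed on (0,1). -/

import Mathlib

open MeasureTheory ProbabilityTheory Matrix

/-!
*The null hypothesis forces `B = 0`.* The last left and right singular vectors `u`, `v` of `Y`
satisfy `uᵀ B v = 0` almost surely. The existence of such a pair is a closed condition on `Y`, and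
the Gaussian law has full support, so such a pair exists for every `Y`. Choosing `Y` whose last
singular pair is, up to sign, a given pair of coordinate vectors shows that every entry of `B`
vanishes.

*The singular values of a centred Gaussian matrix.* Their density is found without a change of
variables on the Stiefel manifold. Integrating by parts along the fields `Y ↦ Y (Yᵀ Y) ^ m`, the
Gaussian integrals of polynomials in `tr ((Yᵀ Y) ^ l)` satisfy loop (Schwinger–Dyson) equations, and
these determine them up to a common scalar. Integrals over the ordered cone against
`∏ xᵢ ^ (N - p) * ∏ (xᵢ ^ 2 - xⱼ ^ 2) * exp (-b * ∑ xᵢ ^ 2)` satisfy the same equations, by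
integrating by parts along `xᵢ ↦ xᵢ ^ (2 m + 1)`: the weight vanishes on the boundary of the cone,
so there is no boundary term. By Stone–Weierstrass these integrals, for all `b`, determine the law
of the singular values.

*The statistic.* The density splits into a function of the leading values times a density of the
trailing ones, so `g` is the unnormalised conditional density of `d_k` given `d_1, …, d_{k-1}`. The
statistic is the conditional survival function evaluated at `d_k` itself, and the probability
integral transform makes it uniform.
-/

namespace Icsv

open MvPolynomial Filter Topology

section LoopEquations

variable {R : Type*} [CommRing R]

/-- The derivation `t_l ↦ 2 l t_{m+l}` on the polynomial ring in formal variables `t_0, t_1, …`.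
The variable `t_l` stands for `tr (YᵀY)^l = ∑ i, d_i ^ (2 * l)`; on such traces this derivation is
the derivative along the vector field `Y ↦ Y (YᵀY)^m`. -/
noncomputable def loopDerivation (R : Type*) [CommRing R] (m : ℕ) :
    Derivation R (MvPolynomial ℕ R) (MvPolynomial ℕ R) :=
  mkDerivation R fun l => ((2 * l : ℕ) : MvPolynomial ℕ R) * X (m + l)

/-- The divergence of the vector field `Y ↦ Y (YᵀY)^m` on matrices with `N` rows, written in the
formal traces `t_l`. -/
noncomputable def loopDivergence (R : Type*) [CommRing R] (N m : ℕ) : MvPolynomial ℕ R :=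
  ((N + m : ℕ) : MvPolynomial ℕ R) * X m + ∑ a ∈ Finset.range m, X (a + 1) * X (m - 1 - a)

/-- The linear functionals on polynomials in the formal traces `t_l` that satisfy the loop
(Schwinger–Dyson) equations of an `N × p` Gaussian matrix; the entries have variance `1 / c`. -/
def loopFunctionals (R : Type*) [CommRing R] (N p : ℕ) (c : R) :
    Submodule R (MvPolynomial ℕ R →ₗ[R] R) where
  carrier := {F | (∀ f, F (X 0 * f) = p * F f) ∧
    ∀ m f, c * F (X (m + 1) * f) = F (loopDivergence R N m * f + loopDerivation R m f)}
  zero_mem' := by simp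
  add_mem' := by
    rintro F G ⟨hF₀, hF⟩ ⟨hG₀, hG⟩
    simp only [Set.mem_ofPred_eq, LinearMap.add_apply, mul_add, hF₀, hG₀, hF, hG, implies_true,
      and_self]
  smul_mem' := by
    rintro a F ⟨hF₀, hF⟩
    simp only [Set.mem_ofPred_eq, LinearMap.smul_apply, smul_eq_mul, mul_left_comm _ a, hF₀, hF,
      implies_true, and_self]

/-- The weight of a monomial when `t_l` has weight `2 l + 1`. With this choice the loop equation for
`t_{m+1} * f` expresses `F (t_{m+1} * f)` through monomials of strictly lower weight. -/
noncomputable def loopWeight : (ℕ →₀ ℕ) →+ ℕ :=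
  Finsupp.weight fun l => 2 * l + 1

theorem loopWeight_single_add (a : ℕ) (s : ℕ →₀ ℕ) :
    loopWeight (Finsupp.single a 1 + s) = 2 * a + 1 + loopWeight s := by
  simp [loopWeight, Finsupp.weight_single]

theorem X_mul_monomial_one {σ : Type*} (i : σ) (s : σ →₀ ℕ) :
    (X i * monomial s 1 : MvPolynomial σ R) = monomial (Finsupp.single i 1 + s) 1 := by
  simp [X, monomial_mul]

theorem exists_eq_single_add {σ : Type*} {s : σ →₀ ℕ} {i : σ} (hi : i ∈ s.support) :
    ∃ s', s = Finsupp.single i 1 + s' :=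
  ⟨s - Finsupp.single i 1, (add_tsub_cancel_of_le (by
    simpa [Nat.one_le_iff_ne_zero] using hi)).symm⟩

theorem map_loopDivergence_mul_monomial_eq_zero {F : MvPolynomial ℕ R →ₗ[R] R} {n : ℕ}
    (hF : ∀ s, loopWeight s < n → F (monomial s 1) = 0) (N m : ℕ) {s : ℕ →₀ ℕ}
    (hs : 2 * m + 2 + loopWeight s < n) : F (loopDivergence R N m * monomial s 1) = 0 := by
  rw [loopDivergence, add_mul, ← nsmul_eq_mul, smul_mul_assoc, map_add, map_nsmul,
    X_mul_monomial_one, hF _ (by rw [loopWeight_single_add]; omega), Finset.sum_mul, map_sum,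
    smul_zero, zero_add]
  refine Finset.sum_eq_zero fun a ha => ?_
  have := Finset.mem_range.mp ha
  rw [mul_assoc, X_mul_monomial_one, X_mul_monomial_one]
  exact hF _ (by simp only [loopWeight_single_add]; omega)

theorem map_loopDerivation_monomial_eq_zero {F : MvPolynomial ℕ R →ₗ[R] R} {n : ℕ}
    (hF : ∀ s, loopWeight s < n → F (monomial s 1) = 0) (m : ℕ) {s : ℕ →₀ ℕ}
    (hs : 2 * m + loopWeight s < n) : F (loopDerivation R m (monomial s 1)) = 0 := by
  rw [loopDerivation, mkDerivation_monomial, one_smul, map_finsuppSum]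
  refine Finset.sum_eq_zero fun l hl => ?_
  obtain ⟨s', hs'⟩ := exists_eq_single_add hl
  have hterm : monomial (s - Finsupp.single l 1) (s l : R) •
        (((2 * l : ℕ) : MvPolynomial ℕ R) * X (m + l)) =
      (s l * (2 * l)) • (X (m + l) * monomial s' 1 : MvPolynomial ℕ R) := by
    rw [show s - Finsupp.single l 1 = s' by rw [hs', add_tsub_cancel_left],
      ← mul_one (s l : R), ← smul_eq_mul, ← smul_monomial, Nat.cast_smul_eq_nsmul]
    simp only [smul_eq_mul, nsmul_eq_mul, Nat.cast_mul]
    ring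
  refine (congrArg F hterm).trans ?_
  rw [map_nsmul, X_mul_monomial_one, hF _ ?_, smul_zero]
  rw [hs', loopWeight_single_add] at hs
  rw [loopWeight_single_add]
  omega

theorem eq_zero_of_mem_loopFunctionals [IsDomain R] {N p : ℕ} {c : R} (hc : c ≠ 0)
    {F : MvPolynomial ℕ R →ₗ[R] R} (hF : F ∈ loopFunctionals R N p c) (h1 : F 1 = 0) : F = 0 := by
  obtain ⟨hzero, hsucc⟩ := hF
  suffices key : ∀ n s, loopWeight s = n → F (monomial s 1) = 0 from
    (basisMonomials ℕ R).ext fun s => by simpa using key _ s rfl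
  intro n
  induction n using Nat.strong_induction_on with | _ n ih => ?_
  intro s hs
  replace ih : ∀ s, loopWeight s < n → F (monomial s 1) = 0 := fun s h => ih _ h s rfl
  obtain rfl | ⟨a, ha⟩ := s.support.eq_empty_or_nonempty.imp Finsupp.support_eq_empty.mp id
  · exact h1
  obtain ⟨s, rfl⟩ := exists_eq_single_add ha
  rw [loopWeight_single_add] at hs
  rw [← X_mul_monomial_one]
  cases a with
  | zero => rw [hzero, ih s (by omega), mul_zero]
  | succ m =>
    refine (mul_eq_zero.mp ((hsucc m _).trans ?_)).resolve_left hc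
    rw [map_add, map_loopDivergence_mul_monomial_eq_zero ih N m (by omega),
      map_loopDerivation_monomial_eq_zero ih m (by omega), add_zero]

theorem smul_eq_smul_of_mem_loopFunctionals [IsDomain R] {N p : ℕ} {c : R} (hc : c ≠ 0)
    {F G : MvPolynomial ℕ R →ₗ[R] R} (hF : F ∈ loopFunctionals R N p c)
    (hG : G ∈ loopFunctionals R N p c) : G 1 • F = F 1 • G :=
  sub_eq_zero.mp <| eq_zero_of_mem_loopFunctionals hc
    (Submodule.sub_mem _ (Submodule.smul_mem _ _ hF) (Submodule.smul_mem _ _ hG))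
    (by simp [mul_comm])

theorem derivation_algHom_eq_algHom_loopDerivation {A : Type*} [CommRing A] [Algebra R A]
    {φ : MvPolynomial ℕ R →ₐ[R] A} {D : Derivation R A A} {m : ℕ}
    (h : ∀ l, D (φ (X l)) = (2 * l : ℕ) * φ (X (m + l))) (f : MvPolynomial ℕ R) :
    D (φ f) = φ (loopDerivation R m f) := by
  induction f using MvPolynomial.induction_on with
  | C a =>
    rw [show φ (C a) = algebraMap R A a from φ.commutes a, D.map_algebraMap, derivation_C, map_zero]
  | add f g hf hg => simp only [map_add, hf, hg]
  | mul_X f l hf =>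
    rw [map_mul, D.leibniz, Derivation.leibniz, hf, h l, loopDerivation, mkDerivation_X]
    simp only [smul_eq_mul, map_add, map_mul, map_natCast]

theorem mkDerivation_eq_sum_mul_pderiv {σ : Type*} [Fintype σ] (v : σ → MvPolynomial σ R)
    (f : MvPolynomial σ R) : mkDerivation R v f = ∑ i, v i * pderiv i f := by
  classical
  have : mkDerivation R v = ∑ i, v i • pderiv i := by
    refine derivation_ext fun i => ?_
    rw [mkDerivation_X, ← Derivation.coeFnAddMonoidHom_apply, map_sum, Finset.sum_apply]
    simp [pderiv_X, Pi.single_apply]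
  rw [this, ← Derivation.coeFnAddMonoidHom_apply, map_sum, Finset.sum_apply]
  simp

theorem mul_map_sum_mul_X_mul_eq_of_ibp {σ : Type*} [Fintype σ] {c : R}
    {L : MvPolynomial σ R →ₗ[R] R} (hL : ∀ i f, c * L (X i * f) = L (pderiv i f))
    (v : σ → MvPolynomial σ R) (f : MvPolynomial σ R) :
    c * L ((∑ i, X i * v i) * f) = L ((∑ i, pderiv i (v i)) * f + mkDerivation R v f) := by
  simp_rw [Finset.sum_mul, mul_assoc, map_sum, Finset.mul_sum, hL, ← map_sum,
    mkDerivation_eq_sum_mul_pderiv, ← Finset.sum_add_distrib, Derivation.leibniz, smul_eq_mul]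
  exact congrArg L (Finset.sum_congr rfl fun i _ => by ring)

end LoopEquations

section GenericMatrix

variable (ι κ R : Type*) [Fintype ι] [CommRing R]

/-- The Gram matrix `YᵀY` of the generic matrix `Y = (X (i, j))`. -/
noncomputable def genericGram : Matrix κ κ (MvPolynomial (ι × κ) R) :=
  (mvPolynomialX ι κ R)ᵀ * mvPolynomialX ι κ R

variable {ι κ R}

theorem transpose_genericGram : (genericGram ι κ R)ᵀ = genericGram ι κ R := by
  simp [genericGram, Matrix.transpose_mul]

/-- The divergence of a matrix field `T` taken along the rows only: its trace is the divergence of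
`T` as a vector field on `ι × κ` matrices. -/
noncomputable def rowDivergence (T : Matrix ι κ (MvPolynomial (ι × κ) R)) :
    Matrix κ κ (MvPolynomial (ι × κ) R) :=
  of fun j l => ∑ i, pderiv (i, j) (T i l)

theorem rowDivergence_mvPolynomialX [DecidableEq κ] :
    rowDivergence (mvPolynomialX ι κ R) = (Fintype.card ι : MvPolynomial (ι × κ) R) • 1 := by
  classical
  ext1 j l
  by_cases h : j = l <;> simp [rowDivergence, pderiv_X, h, Pi.single_apply, eq_comm]

theorem pderiv_genericGram [DecidableEq κ] (i : ι) (j q l : κ) :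
    pderiv (i, j) (genericGram ι κ R q l) =
      (if q = j then X (i, l) else 0) + (if l = j then X (i, q) else 0) := by
  classical
  simp only [genericGram, Matrix.mul_apply, Matrix.transpose_apply, map_sum, Derivation.leibniz,
    smul_eq_mul, Finset.sum_add_distrib, mvPolynomialX_apply, pderiv_X, Pi.single_apply,
    Prod.mk.injEq, mul_ite, mul_one, mul_zero]
  rw [add_comm]
  congr 1
  · by_cases h : q = j <;> simp [h]
  · by_cases h : l = j <;> simp [h]

variable (ι κ R) [Fintype κ] [DecidableEq κ]

/-- The substitution `t_l ↦ tr (YᵀY)^l` for the generic matrix `Y`. -/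
noncomputable def tracePowers : MvPolynomial ℕ R →ₐ[R] MvPolynomial (ι × κ) R :=
  aeval fun l => trace (genericGram ι κ R ^ l)

/-- The derivative along the vector field `Y ↦ Y (YᵀY)^m`. -/
noncomputable def gramDerivation (m : ℕ) :
    Derivation R (MvPolynomial (ι × κ) R) (MvPolynomial (ι × κ) R) :=
  mkDerivation R fun ij => (mvPolynomialX ι κ R * genericGram ι κ R ^ m) ij.1 ij.2

variable {ι κ R}

theorem transpose_genericGram_pow (m : ℕ) :
    (genericGram ι κ R ^ m)ᵀ = genericGram ι κ R ^ m := by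
  rw [Matrix.transpose_pow, transpose_genericGram]

theorem map_derivation_mul {A l m n : Type*} [CommRing A] [Algebra R A] [Fintype m]
    (D : Derivation R A A) (S : Matrix l m A) (T : Matrix m n A) :
    (S * T).map D = S.map D * T + S * T.map D := by
  ext i j
  simp only [map_apply, Matrix.mul_apply, Matrix.add_apply, map_sum, D.leibniz, smul_eq_mul,
    Finset.sum_add_distrib]
  rw [add_comm]
  simp only [mul_comm]

theorem map_gramDerivation_genericGram (m : ℕ) :
    (genericGram ι κ R).map (gramDerivation ι κ R m) =
      (2 : MvPolynomial (ι × κ) R) • genericGram ι κ R ^ (m + 1) := by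
  have hY : (mvPolynomialX ι κ R).map (gramDerivation ι κ R m) =
      mvPolynomialX ι κ R * genericGram ι κ R ^ m := by
    ext i j
    rw [map_apply, mvPolynomialX_apply, gramDerivation, mkDerivation_X]
  conv_lhs => rw [genericGram]
  rw [map_derivation_mul, transpose_map, hY, Matrix.transpose_mul, transpose_genericGram_pow,
    Matrix.mul_assoc, ← Matrix.mul_assoc (mvPolynomialX ι κ R)ᵀ, ← genericGram, ← pow_succ,
    ← pow_succ', two_smul]

theorem map_gramDerivation_genericGram_pow (m l : ℕ) :
    (genericGram ι κ R ^ l).map (gramDerivation ι κ R m) =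
      ((2 * l : ℕ) : MvPolynomial (ι × κ) R) • genericGram ι κ R ^ (m + l) := by
  induction l with
  | zero =>
    ext i j
    by_cases h : i = j <;> simp [h]
  | succ l ih =>
    rw [pow_succ, map_derivation_mul, ih, map_gramDerivation_genericGram, Matrix.smul_mul,
      ← pow_succ, Matrix.mul_smul, ← pow_add, show l + (m + 1) = m + l + 1 by ring, ← add_smul]
    push_cast
    congr 1
    ring

theorem gramDerivation_tracePowers (m : ℕ) (f : MvPolynomial ℕ R) :
    gramDerivation ι κ R m (tracePowers ι κ R f) =
      tracePowers ι κ R (loopDerivation R m f) := by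
  refine derivation_algHom_eq_algHom_loopDerivation (fun l => ?_) f
  have h := congrArg trace (map_gramDerivation_genericGram_pow (ι := ι) (κ := κ) (R := R) m l)
  rw [← AddMonoidHom.map_trace (gramDerivation ι κ R m), trace_smul, smul_eq_mul] at h
  rw [tracePowers, aeval_X, aeval_X]
  exact h

theorem rowDivergence_mul_genericGram (T : Matrix ι κ (MvPolynomial (ι × κ) R)) :
    rowDivergence (T * genericGram ι κ R) = rowDivergence T * genericGram ι κ R +
      Tᵀ * mvPolynomialX ι κ R + trace (Tᵀ * mvPolynomialX ι κ R) • 1 := by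
  have hT : ∀ i j l, pderiv (i, j) ((T * genericGram ι κ R) i l) =
      ∑ q, pderiv (i, j) (T i q) * genericGram ι κ R q l + T i j * X (i, l) +
        (if j = l then ∑ q, T i q * X (i, q) else 0) := by
    intro i j l
    simp only [Matrix.mul_apply, map_sum, Derivation.leibniz, smul_eq_mul, pderiv_genericGram,
      mul_add, mul_ite, mul_zero, Finset.sum_add_distrib, Finset.sum_ite_eq', Finset.mem_univ,
      if_true, mul_comm (genericGram ι κ R _ l)]
    by_cases h : l = j
    · simp only [h, if_true]
      ring
    · simp only [h, Ne.symm h, if_false, Finset.sum_const_zero]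
      ring
  ext1 j l
  simp only [rowDivergence, of_apply, hT, Finset.sum_add_distrib]
  simp only [Matrix.add_apply, Matrix.smul_apply, Matrix.mul_apply, of_apply, Finset.sum_mul,
    transpose_apply, mvPolynomialX_apply, trace, diag_apply, one_apply, smul_eq_mul, mul_ite,
    mul_one, mul_zero]
  rw [Finset.sum_comm (f := fun i q => pderiv (i, j) (T i q) * genericGram ι κ R q l)]
  by_cases h : j = l
  · simp only [h, if_true]
    rw [Finset.sum_comm (f := fun i q => T i q * X (i, q))]
  · simp [h]

theorem rowDivergence_mvPolynomialX_mul_genericGram_pow (n : ℕ) :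
    rowDivergence (mvPolynomialX ι κ R * genericGram ι κ R ^ n) =
      ((Fintype.card ι + n : ℕ) : MvPolynomial (ι × κ) R) • genericGram ι κ R ^ n +
        ∑ a ∈ Finset.range n,
          trace (genericGram ι κ R ^ (a + 1)) • genericGram ι κ R ^ (n - 1 - a) := by
  induction n with
  | zero => simp [rowDivergence_mvPolynomialX]
  | succ n ih =>
    have hW : (mvPolynomialX ι κ R * genericGram ι κ R ^ n)ᵀ * mvPolynomialX ι κ R =
        genericGram ι κ R ^ (n + 1) := by
      rw [Matrix.transpose_mul, transpose_genericGram_pow, Matrix.mul_assoc, ← genericGram,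
        pow_succ]
    have hsum : (∑ a ∈ Finset.range n,
          trace (genericGram ι κ R ^ (a + 1)) • genericGram ι κ R ^ (n - 1 - a)) *
            genericGram ι κ R =
        ∑ a ∈ Finset.range n,
          trace (genericGram ι κ R ^ (a + 1)) • genericGram ι κ R ^ (n - a) := by
      rw [Finset.sum_mul]
      refine Finset.sum_congr rfl fun a ha => ?_
      have := Finset.mem_range.mp ha
      rw [Matrix.smul_mul, ← pow_succ, show n - 1 - a + 1 = n - a by omega]
    rw [pow_succ, ← Matrix.mul_assoc, rowDivergence_mul_genericGram, hW, ih, add_mul, hsum,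
      Matrix.smul_mul, ← pow_succ, Finset.sum_range_succ, Nat.add_sub_cancel, Nat.sub_self,
      pow_zero, ← add_assoc (Fintype.card ι), Nat.cast_succ, add_smul, one_smul]
    abel

theorem sum_pderiv_mvPolynomialX_mul_genericGram_pow (n : ℕ) :
    ∑ ij : ι × κ, pderiv ij ((mvPolynomialX ι κ R * genericGram ι κ R ^ n) ij.1 ij.2) =
      tracePowers ι κ R (loopDivergence R (Fintype.card ι) n) := by
  have h := congrArg trace
    (rowDivergence_mvPolynomialX_mul_genericGram_pow (ι := ι) (κ := κ) (R := R) n)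
  rw [Fintype.sum_prod_type_right]
  refine h.trans ?_
  simp [loopDivergence, tracePowers, trace_add, trace_smul, trace_sum]

theorem tracePowers_X_succ (m : ℕ) :
    tracePowers ι κ R (X (m + 1)) =
      ∑ ij : ι × κ, X ij * (mvPolynomialX ι κ R * genericGram ι κ R ^ m) ij.1 ij.2 := by
  rw [tracePowers, aeval_X, pow_succ', genericGram, Matrix.mul_assoc, ← genericGram,
    Fintype.sum_prod_type_right]
  simp [trace, Matrix.mul_apply (M := (mvPolynomialX ι κ R)ᵀ)]

theorem comp_tracePowers_mem_loopFunctionals {c : R} {L : MvPolynomial (ι × κ) R →ₗ[R] R}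
    (hL : ∀ i f, c * L (X i * f) = L (pderiv i f)) :
    L ∘ₗ (tracePowers ι κ R).toLinearMap ∈
      loopFunctionals R (Fintype.card ι) (Fintype.card κ) c := by
  refine ⟨fun f => ?_, fun m f => ?_⟩
  · have h0 : tracePowers ι κ R (X 0) = (Fintype.card κ : MvPolynomial (ι × κ) R) := by
      simp [tracePowers]
    simp [h0, ← nsmul_eq_mul]
  · have h := mul_map_sum_mul_X_mul_eq_of_ibp hL
      (fun ij => (mvPolynomialX ι κ R * genericGram ι κ R ^ m) ij.1 ij.2) (tracePowers ι κ R f)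
    rw [← tracePowers_X_succ, sum_pderiv_mvPolynomialX_mul_genericGram_pow, ← gramDerivation,
      gramDerivation_tracePowers] at h
    simpa using h

end GenericMatrix

section SingularValueDensity

theorem two_mul_sum_Ioi_geom_sum_add {A : Type*} [CommRing A] {p : ℕ} (x : Fin p → A) (m : ℕ) :
    2 * ∑ i, ∑ j ∈ Finset.Ioi i, ∑ a ∈ Finset.range (m + 1), x i ^ a * x j ^ (m - a) +
        ((m + 1 : ℕ) : A) * ∑ i, x i ^ m =
      ∑ a ∈ Finset.range (m + 1), (∑ i, x i ^ a) * ∑ i, x i ^ (m - a) := by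
  let S : Fin p → Fin p → A := fun i j => ∑ a ∈ Finset.range (m + 1), x i ^ a * x j ^ (m - a)
  have hsymm : ∀ i j, S i j = S j i := fun i j => by
    simp only [S]
    rw [← Finset.sum_range_reflect]
    refine Finset.sum_congr rfl fun a ha => ?_
    have := Finset.mem_range.mp ha
    rw [show m + 1 - 1 - a = m - a by omega, show m - (m - a) = a by omega, mul_comm]
  have hdiag : ∀ i, S i i = ((m + 1 : ℕ) : A) * x i ^ m := fun i => by
    have : ∀ a ∈ Finset.range (m + 1), x i ^ a * x i ^ (m - a) = x i ^ m := fun a ha => by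
      rw [← pow_add, Nat.add_sub_cancel' (Nat.le_of_lt_succ (Finset.mem_range.mp ha))]
    simp only [S, Finset.sum_congr rfl this, Finset.sum_const, Finset.card_range, nsmul_eq_mul]
  have htwo : ∀ i j, S j i + S i j = 2 * S i j := fun i j => by rw [hsymm j i, two_mul]
  calc _ = ∑ i, ∑ j ∈ Finset.Ioi i, (S j i + S i j) + ∑ i, S i i := by
        simp only [htwo, hdiag, ← Finset.mul_sum, S]
    _ = ∑ i, ∑ j, S i j := by
        rw [Finset.sum_sum_Ioi_add_eq_sum_sum_off_diag, ← Finset.sum_add_distrib]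
        refine Finset.sum_congr rfl fun i _ => ?_
        rw [add_comm, ← Fintype.sum_eq_add_sum_compl i fun j => S j i]
        exact Finset.sum_congr rfl fun j _ => hsymm j i
    _ = _ := by
        simp only [S, Finset.sum_mul_sum]
        exact (Finset.sum_congr rfl fun i _ => Finset.sum_comm).trans Finset.sum_comm

theorem derivation_prod_of_eq_mul {R A ι : Type*} [CommRing R] [CommRing A] [Algebra R A]
    (D : Derivation R A A) (s : Finset ι) {f q : ι → A} (h : ∀ i ∈ s, D (f i) = f i * q i) :
    D (∏ i ∈ s, f i) = (∏ i ∈ s, f i) * ∑ i ∈ s, q i := by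
  classical
  induction s using Finset.induction_on with
  | empty => simp
  | insert a s ha ih =>
    rw [Finset.prod_insert ha, Finset.sum_insert ha, D.leibniz,
      ih fun i hi => h i (Finset.mem_insert_of_mem hi), h a (Finset.mem_insert_self _ _)]
    simp only [smul_eq_mul]
    ring

variable (R : Type*) [CommRing R]

/-- The substitution `t_l ↦ ∑ i, x_i ^ (2 * l)`. -/
noncomputable def evenPowerSums (p : ℕ) : MvPolynomial ℕ R →ₐ[R] MvPolynomial (Fin p) R :=
  aeval fun l => ∑ i, X i ^ (2 * l)

/-- The derivative along the vector field `x ↦ (x_i ^ (2 * m + 1))_i`. -/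
noncomputable def oddPowerDerivation (p m : ℕ) :
    Derivation R (MvPolynomial (Fin p) R) (MvPolynomial (Fin p) R) :=
  mkDerivation R fun i => X i ^ (2 * m + 1)

/-- The polynomial `∏ x_i ^ M * ∏_{i < j} (x_i ^ 2 - x_j ^ 2)`: up to a constant, the Jacobian of
the singular value decomposition of `(M + p) × p` matrices. -/
noncomputable def svdJacobian (M p : ℕ) : MvPolynomial (Fin p) R :=
  (∏ i, X i ^ M) * ∏ i, ∏ j ∈ Finset.Ioi i, (X i ^ 2 - X j ^ 2)

variable {R}

theorem evenPowerSums_X (p m : ℕ) :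
    evenPowerSums R p (X m) = ∑ i, X i ^ (2 * m) :=
  aeval_X _ _

theorem evenPowerSums_X_zero (p : ℕ) :
    evenPowerSums R p (X 0) = (p : MvPolynomial (Fin p) R) := by
  simp [evenPowerSums_X]

theorem oddPowerDerivation_X_pow (p m l : ℕ) (i : Fin p) :
    oddPowerDerivation R p m (X i ^ l) = (l : MvPolynomial (Fin p) R) * X i ^ (2 * m + l) := by
  rw [Derivation.leibniz_pow, oddPowerDerivation, mkDerivation_X]
  cases l with
  | zero => simp
  | succ l =>
    rw [Nat.add_sub_cancel, nsmul_eq_mul, smul_eq_mul, ← pow_add]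
    ring

theorem oddPowerDerivation_evenPowerSums (p m : ℕ) (f : MvPolynomial ℕ R) :
    oddPowerDerivation R p m (evenPowerSums R p f) =
      evenPowerSums R p (loopDerivation R m f) := by
  refine derivation_algHom_eq_algHom_loopDerivation (fun l => ?_) f
  simp only [evenPowerSums_X, map_sum, oddPowerDerivation_X_pow, Finset.mul_sum, mul_add]

theorem oddPowerDerivation_prod_X_pow (M p m : ℕ) :
    oddPowerDerivation R p m (∏ i, X i ^ M) =
      (∏ i, X i ^ M) * ((M : MvPolynomial (Fin p) R) * evenPowerSums R p (X m)) := by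
  rw [evenPowerSums_X, Finset.mul_sum]
  refine derivation_prod_of_eq_mul _ _ fun i _ => ?_
  rw [oddPowerDerivation_X_pow]
  ring

theorem oddPowerDerivation_vandermonde (p m : ℕ) :
    oddPowerDerivation R p m (∏ i, ∏ j ∈ Finset.Ioi i, (X i ^ 2 - X j ^ 2)) =
      (∏ i, ∏ j ∈ Finset.Ioi i, (X i ^ 2 - X j ^ 2)) *
        (2 * ∑ i, ∑ j ∈ Finset.Ioi i,
          ∑ a ∈ Finset.range (m + 1), (X i ^ 2) ^ a * (X j ^ 2) ^ (m - a)) := by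
  simp only [Finset.mul_sum _ _ (2 : MvPolynomial (Fin p) R)]
  refine derivation_prod_of_eq_mul _ _ fun i _ => derivation_prod_of_eq_mul _ _ fun j _ => ?_
  have hgeom := geom_sum₂_mul (X i ^ 2 : MvPolynomial (Fin p) R) (X j ^ 2) (m + 1)
  simp only [Nat.add_sub_cancel] at hgeom
  rw [map_sub, oddPowerDerivation_X_pow, oddPowerDerivation_X_pow, ← Finset.mul_sum]
  push_cast
  linear_combination (-2) * hgeom

theorem sum_pderiv_X_pow (p m : ℕ) :
    ∑ i : Fin p, pderiv i (X i ^ (2 * m + 1) : MvPolynomial (Fin p) R) =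
      ((2 * m + 1 : ℕ) : MvPolynomial (Fin p) R) * evenPowerSums R p (X m) := by
  rw [evenPowerSums_X, Finset.mul_sum]
  refine Finset.sum_congr rfl fun i _ => ?_
  rw [pderiv_pow, pderiv_X_self, mul_one, Nat.add_sub_cancel]

theorem sum_range_evenPowerSums_mul (p m : ℕ) :
    ∑ a ∈ Finset.range (m + 1), evenPowerSums R p (X a) * evenPowerSums R p (X (m - a)) =
      (p : MvPolynomial (Fin p) R) * evenPowerSums R p (X m) +
        ∑ a ∈ Finset.range m,
          evenPowerSums R p (X (a + 1)) * evenPowerSums R p (X (m - 1 - a)) := by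
  rw [Finset.sum_range_succ', add_comm, evenPowerSums_X_zero, Nat.sub_zero]
  refine congrArg _ (Finset.sum_congr rfl fun a _ => ?_)
  rw [show m - (a + 1) = m - 1 - a by omega]

-- The weighted divergence of `x ↦ (x_i ^ (2 * m + 1))_i` against the density `svdJacobian`
-- agrees with the divergence of `Y ↦ Y (YᵀY)^m`.
theorem sum_pderiv_mul_svdJacobian_add (M p m : ℕ) :
    (∑ i : Fin p, pderiv i (X i ^ (2 * m + 1))) * svdJacobian R M p +
        oddPowerDerivation R p m (svdJacobian R M p) =
      svdJacobian R M p * evenPowerSums R p (loopDivergence R (M + p) m) := by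
  have hgeom := two_mul_sum_Ioi_geom_sum_add (fun i : Fin p => (X i ^ 2 : MvPolynomial (Fin p) R)) m
  simp only [← pow_mul (X _) 2 m, ← evenPowerSums_X] at hgeom
  have hsums : ∀ a, ∑ i : Fin p, (X i ^ 2 : MvPolynomial (Fin p) R) ^ a =
      evenPowerSums R p (X a) := fun a => by simp only [evenPowerSums_X, pow_mul]
  simp only [hsums, sum_range_evenPowerSums_mul] at hgeom
  have hdiv : evenPowerSums R p (loopDivergence R (M + p) m) =
      ((M + p + m : ℕ) : MvPolynomial (Fin p) R) * evenPowerSums R p (X m) +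
        ∑ a ∈ Finset.range m,
          evenPowerSums R p (X (a + 1)) * evenPowerSums R p (X (m - 1 - a)) := by
    simp only [loopDivergence, map_add, map_mul, map_sum, map_natCast]
  rw [sum_pderiv_X_pow, svdJacobian, Derivation.leibniz, oddPowerDerivation_prod_X_pow,
    oddPowerDerivation_vandermonde, hdiv]
  simp only [smul_eq_mul]
  push_cast at hgeom ⊢
  linear_combination (((∏ i, X i ^ M) * ∏ i, ∏ j ∈ Finset.Ioi i, (X i ^ 2 - X j ^ 2) :
    MvPolynomial (Fin p) R)) * hgeom

theorem comp_evenPowerSums_mem_loopFunctionals {M p : ℕ} {c : R}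
    {K : MvPolynomial (Fin p) R →ₗ[R] R}
    (hK : ∀ (v : Fin p → MvPolynomial (Fin p) R) (q : MvPolynomial (Fin p) R),
      mkDerivation R v (svdJacobian R M p) = svdJacobian R M p * q → ∀ f,
        c * K ((∑ i, X i * v i) * f) =
          K ((∑ i, pderiv i (v i) + q) * f + mkDerivation R v f)) :
    K ∘ₗ (evenPowerSums R p).toLinearMap ∈ loopFunctionals R (M + p) p c := by
  refine ⟨fun f => ?_, fun m f => ?_⟩
  · simp only [LinearMap.comp_apply, AlgHom.toLinearMap_apply, map_mul, evenPowerSums_X_zero,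
      ← nsmul_eq_mul, map_nsmul]
  · have hq : mkDerivation R (fun i : Fin p => X i ^ (2 * m + 1)) (svdJacobian R M p) =
        svdJacobian R M p * (evenPowerSums R p (loopDivergence R (M + p) m) -
          ∑ i : Fin p, pderiv i (X i ^ (2 * m + 1))) := by
      rw [mul_sub, ← sum_pderiv_mul_svdJacobian_add, mul_comm (svdJacobian R M p),
        add_sub_cancel_left, oddPowerDerivation]
    have hsum : evenPowerSums R p (X (m + 1)) = ∑ i : Fin p, X i * X i ^ (2 * m + 1) := by
      simp only [evenPowerSums_X, ← pow_succ', mul_add, mul_one, add_assoc, one_add_one_eq_two]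
    have h := hK _ _ hq (evenPowerSums R p f)
    rw [add_sub_cancel] at h
    simpa only [LinearMap.comp_apply, AlgHom.toLinearMap_apply, map_mul, map_add, hsum,
      ← oddPowerDerivation_evenPowerSums, oddPowerDerivation] using h

end SingularValueDensity

section GaussianWeight

variable {ι : Type*} [Fintype ι]

/-- The unnormalised centred Gaussian density with coordinates of variance `1 / (2 * b)`. -/
noncomputable def gaussianWeight (b : ℝ) (x : ι → ℝ) : ℝ :=
  Real.exp (-b * ∑ i, x i ^ 2)

theorem gaussianWeight_pos (b : ℝ) (x : ι → ℝ) : 0 < gaussianWeight b x :=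
  Real.exp_pos _

theorem continuous_gaussianWeight (b : ℝ) : Continuous (gaussianWeight b : (ι → ℝ) → ℝ) := by
  unfold gaussianWeight
  fun_prop

theorem gaussianWeight_eq_prod (b : ℝ) (x : ι → ℝ) :
    gaussianWeight b x = ∏ i, Real.exp (-b * x i ^ 2) := by
  rw [gaussianWeight, Finset.mul_sum, Real.exp_sum]

theorem gaussianWeight_one_sqrt_smul {b : ℝ} (hb : 0 ≤ b) (x : ι → ℝ) :
    gaussianWeight 1 (√b • x) = gaussianWeight b x := by
  simp [gaussianWeight, mul_pow, Real.sq_sqrt hb, ← Finset.mul_sum]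

theorem integrable_pow_mul_exp_neg_mul_sq {b : ℝ} (hb : 0 < b) (n : ℕ) :
    Integrable fun x : ℝ => x ^ n * Real.exp (-b * x ^ 2) := by
  simpa using integrable_rpow_mul_exp_neg_mul_sq hb (s := n) (by linarith [n.cast_nonneg (α := ℝ)])

theorem integrable_eval_mul_gaussianWeight {b : ℝ} (hb : 0 < b) (Q : MvPolynomial ι ℝ) :
    Integrable fun x : ι → ℝ => eval x Q * gaussianWeight b x := by
  induction Q using MvPolynomial.induction_on' with
  | monomial s a =>
    refine ((Integrable.fintype_prod (f := fun i y => y ^ s i * Real.exp (-b * y ^ 2)) fun i =>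
      integrable_pow_mul_exp_neg_mul_sq hb (s i)).const_mul a).congr (.of_forall fun x => ?_)
    simp only [eval_monomial, gaussianWeight_eq_prod]
    rw [Finset.prod_mul_distrib,
      Finsupp.prod_fintype _ _ fun _ => pow_zero _, mul_assoc]
  | add P Q hP hQ => simpa only [map_add, add_mul] using Integrable.fun_add hP hQ

theorem hasFDerivAt_eval (Q : MvPolynomial ι ℝ) (x : ι → ℝ) :
    HasFDerivAt (fun x : ι → ℝ => eval x Q)
      (∑ i, eval x (pderiv i Q) • ContinuousLinearMap.proj (R := ℝ) (φ := fun _ : ι => ℝ) i) x := by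
  classical
  induction Q using MvPolynomial.induction_on with
  | C a => simpa using hasFDerivAt_const (𝕜 := ℝ) a x
  | add P Q hP hQ => simpa only [map_add, add_smul, Finset.sum_add_distrib] using hP.fun_add hQ
  | mul_X P j hP =>
    simp only [map_mul, eval_X]
    refine (hP.fun_mul (hasFDerivAt_apply j x)).congr_fderiv ?_
    ext y
    simp [pderiv_X, Pi.single_apply, add_mul, Finset.sum_add_distrib, Finset.mul_sum, mul_assoc,
      apply_ite (eval x), ite_mul]

theorem hasFDerivAt_gaussianWeight (b : ℝ) (x : ι → ℝ) :
    HasFDerivAt (gaussianWeight b) (gaussianWeight b x •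
      ∑ i, (-2 * b * x i) • ContinuousLinearMap.proj (R := ℝ) (φ := fun _ : ι => ℝ) i) x := by
  classical
  have h := (hasFDerivAt_eval (C (-b) * ∑ j, X j ^ 2) x).exp
  simp only [map_mul, map_sum, map_pow, eval_C, eval_X] at h
  refine h.congr_fderiv (congrArg _ (Finset.sum_congr rfl fun i _ => ?_))
  simp [pderiv_X, Pi.single_apply]
  ring_nf

theorem hasLineDerivAt_eval_mul_gaussianWeight [DecidableEq ι] (b : ℝ) (Q : MvPolynomial ι ℝ)
    (i : ι) (x : ι → ℝ) :
    HasLineDerivAt ℝ (fun x => eval x Q * gaussianWeight b x)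
      (eval x (pderiv i Q - C (2 * b) * (X i * Q)) * gaussianWeight b x) x (Pi.single i 1) := by
  refine HasDerivAt.congr_deriv (((hasFDerivAt_eval Q x).fun_mul
    (hasFDerivAt_gaussianWeight b x)).hasLineDerivAt (Pi.single i 1)) ?_
  simp [Pi.single_apply]
  ring

/-- Integration of polynomials over `S` against a Gaussian weight. -/
noncomputable def gaussianIntegral {b : ℝ} (hb : 0 < b) (S : Set (ι → ℝ)) :
    MvPolynomial ι ℝ →ₗ[ℝ] ℝ where
  toFun Q := ∫ x in S, eval x Q * gaussianWeight b x
  map_add' P Q := by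
    simp only [map_add, add_mul]
    exact integral_add (integrable_eval_mul_gaussianWeight hb P).integrableOn
      (integrable_eval_mul_gaussianWeight hb Q).integrableOn
  map_smul' a Q := by
    simp only [smul_eval, mul_assoc, integral_const_mul, smul_eq_mul, RingHom.id_apply]

theorem gaussianIntegral_apply {b : ℝ} (hb : 0 < b) (S : Set (ι → ℝ)) (Q : MvPolynomial ι ℝ) :
    gaussianIntegral hb S Q = ∫ x in S, eval x Q * gaussianWeight b x :=
  rfl

theorem eval_smul_of_isHomogeneous {σ R : Type*} [CommSemiring R] {Q : MvPolynomial σ R} {n : ℕ}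
    (hQ : Q.IsHomogeneous n) (s : R) (x : σ → R) : eval (s • x) Q = s ^ n * eval x Q := by
  rw [eval_eq, eval_eq, Finset.mul_sum]
  refine Finset.sum_congr rfl fun d hd => ?_
  rw [hQ.degree_eq_sum_deg_support hd, ← Finset.prod_pow_eq_pow_sum]
  simp only [Pi.smul_apply, smul_eq_mul, mul_pow, Finset.prod_mul_distrib]
  ring

theorem sqrt_pow_mul_gaussianIntegral {b : ℝ} (hb : 0 < b) {S : Set (ι → ℝ)}
    (hS : MeasurableSet S) (hsmul : ∀ s > (0 : ℝ), ∀ x, s • x ∈ S ↔ x ∈ S) {n : ℕ}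
    {Q : MvPolynomial ι ℝ} (hQ : Q.IsHomogeneous n) :
    √b ^ (Fintype.card ι + n) * gaussianIntegral hb S Q = gaussianIntegral one_pos S Q := by
  have hs : 0 < √b := Real.sqrt_pos.mpr hb
  have h := Measure.integral_comp_smul_of_nonneg (volume : Measure (ι → ℝ))
    (S.indicator fun x => eval x Q * gaussianWeight 1 x) (√b) (hR := hs.le)
  have hind : ∀ x, S.indicator (fun x => eval x Q * gaussianWeight 1 x) (√b • x) =
      √b ^ n * S.indicator (fun x => eval x Q * gaussianWeight b x) x := fun x => by
    by_cases hx : x ∈ S <;>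
    simp [Set.indicator, hsmul _ hs, hx, eval_smul_of_isHomogeneous hQ,
      gaussianWeight_one_sqrt_smul hb.le, mul_assoc]
  simp only [hind, integral_const_mul, integral_indicator hS, Module.finrank_fintype_fun_eq_card,
    smul_eq_mul, ← gaussianIntegral_apply hb, ← gaussianIntegral_apply one_pos] at h
  rw [pow_add, mul_assoc, h, mul_inv_cancel_left₀ (pow_pos hs _).ne']

theorem gaussianIntegral_pos {b : ℝ} (hb : 0 < b) {S : Set (ι → ℝ)} (hS : MeasurableSet S)
    {Q : MvPolynomial ι ℝ} (hQ : ∀ x ∈ S, 0 ≤ eval x Q) {x : ι → ℝ} (hx : S ∈ 𝓝 x)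
    (hQx : eval x Q ≠ 0) : 0 < gaussianIntegral hb S Q := by
  rw [gaussianIntegral_apply, integral_pos_iff_support_of_nonneg_ae
    (ae_restrict_of_forall_mem hS fun y hy => mul_nonneg (hQ y hy) (gaussianWeight_pos b y).le)
    (integrable_eval_mul_gaussianWeight hb Q).integrableOn]
  refine (Measure.measure_pos_of_mem_nhds volume (x := x) ?_).trans_le
    (Measure.le_restrict_apply _ _)
  filter_upwards [hx, (MvPolynomial.continuous_eval Q).continuousAt.eventually_ne hQx] with y hy hQy
  exact ⟨mul_ne_zero hQy (gaussianWeight_pos b y).ne', hy⟩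

end GaussianWeight

section IntegrationByParts

theorem abs_div_add_le_one {a ε : ℝ} (ha : 0 ≤ a) (hε : 0 < ε) : |a / (a + ε)| ≤ 1 := by
  rw [abs_of_nonneg (by positivity), div_le_one (by positivity)]
  linarith

theorem abs_one_sub_div_add_sq_le_one {a ε : ℝ} (ha : 0 ≤ a) (hε : 0 < ε) :
    |1 - (ε / (a + ε)) ^ 2| ≤ 1 := by
  have h₁ : ε / (a + ε) ≤ 1 := (div_le_one (by positivity)).mpr (by linarith)
  have h₂ : 0 ≤ ε / (a + ε) := by positivity
  rw [abs_le]
  constructor <;> nlinarith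

theorem hasDerivAt_sq_div_add {a ε : ℝ} (h : a + ε ≠ 0) :
    HasDerivAt (fun t : ℝ => t ^ 2 / (t + ε)) (1 - (ε / (a + ε)) ^ 2) a := by
  refine (((hasDerivAt_id' a).fun_pow 2).fun_div ((hasDerivAt_id' a).add_const ε) h).congr_deriv ?_
  field_simp
  ring

section Regularisation

variable {E : Type*} [NormedAddCommGroup E] [NormedSpace ℝ E] {S : Set E} {u : E → ℝ}
  {u' : E →L[ℝ] ℝ} {x : E} {ε : ℝ}

theorem hasFDerivAt_indicator_sq_div_add_of_eq_zero (hu : HasFDerivAt u u' x) (hux : u x = 0)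
    (hnonneg : ∀ y ∈ S, 0 ≤ u y) (hε : 0 < ε) :
    HasFDerivAt (S.indicator fun y => u y ^ 2 / (u y + ε)) (0 : E →L[ℝ] ℝ) x := by
  have hsq : HasFDerivAt (fun y => u y ^ 2 / ε) (0 : E →L[ℝ] ℝ) x := by
    simpa [hux, div_eq_mul_inv] using (hu.pow 2).mul_const ε⁻¹
  have hzero : S.indicator (fun y => u y ^ 2 / (u y + ε)) x = 0 := by
    simp [Set.indicator, hux]
  refine .of_isLittleO (Asymptotics.IsBigO.trans_isLittleO (.of_norm_le fun y => ?_)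
    hsq.isLittleO)
  simp only [hzero, hux, ne_eq, OfNat.ofNat_ne_zero, not_false_eq_true, zero_pow, zero_div,
    sub_zero, _root_.zero_apply]
  by_cases hy : y ∈ S
  · have := hnonneg y hy
    rw [Set.indicator_of_mem hy, Real.norm_of_nonneg (by positivity)]
    gcongr
    linarith
  · rw [Set.indicator_of_notMem hy, norm_zero]
    positivity

theorem hasFDerivAt_indicator_sq_div_add (hS : IsClosed S) (hu : HasFDerivAt u u' x)
    (hnonneg : ∀ y ∈ S, 0 ≤ u y) (hnhds : x ∈ S → u x ≠ 0 → S ∈ 𝓝 x) (hε : 0 < ε) :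
    HasFDerivAt (S.indicator fun y => u y ^ 2 / (u y + ε))
      (S.indicator (fun y => 1 - (ε / (u y + ε)) ^ 2) x • u') x := by
  by_cases hx : x ∈ S
  · rw [Set.indicator_of_mem hx]
    by_cases hux : u x = 0
    · simpa [hux, hε.ne'] using hasFDerivAt_indicator_sq_div_add_of_eq_zero hu hux hnonneg hε
    · have hden : u x + ε ≠ 0 := (add_pos_of_nonneg_of_pos (hnonneg x hx) hε).ne'
      refine ((hasDerivAt_sq_div_add hden).comp_hasFDerivAt x hu).congr_of_eventuallyEq ?_
      filter_upwards [hnhds hx hux] with y hy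
      exact Set.indicator_of_mem hy _
  · rw [Set.indicator_of_notMem hx, zero_smul]
    refine (hasFDerivAt_const (0 : ℝ) x).congr_of_eventuallyEq ?_
    filter_upwards [hS.isOpen_compl.mem_nhds hx] with y hy
    exact Set.indicator_of_notMem hy _

end Regularisation

variable {ι : Type*} [Fintype ι] {b : ℝ} {S : Set (ι → ℝ)} {J : MvPolynomial ι ℝ}

theorem integrableOn_comp_eval_mul (hb : 0 < b) (hS : MeasurableSet S)
    (hJ : ∀ x ∈ S, 0 ≤ eval x J) {θ : ℝ → ℝ} (hθ : Measurable θ) (hθ₁ : ∀ a, 0 ≤ a → |θ a| ≤ 1)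
    (Q : MvPolynomial ι ℝ) :
    IntegrableOn (fun x => θ (eval x J) * (eval x Q * gaussianWeight b x)) S := by
  refine (integrable_eval_mul_gaussianWeight hb Q).integrableOn.bdd_mul
    (hθ.comp (MvPolynomial.continuous_eval J).measurable).aestronglyMeasurable (c := 1) ?_
  exact ae_restrict_of_forall_mem hS fun x hx => hθ₁ _ (hJ x hx)

theorem tendsto_setIntegral_comp_eval_mul (hb : 0 < b) (hS : MeasurableSet S)
    (hJ : ∀ x ∈ S, 0 ≤ eval x J) {θ : ℕ → ℝ → ℝ} (hθ : ∀ n, Measurable (θ n))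
    (hθ₁ : ∀ n a, 0 ≤ a → |θ n a| ≤ 1) (hlim : ∀ a, 0 < a → Tendsto (θ · a) atTop (𝓝 1))
    (Q : MvPolynomial ι ℝ) :
    Tendsto (fun n => ∫ x in S, θ n (eval x J) * (eval x (J * Q) * gaussianWeight b x)) atTop
      (𝓝 (gaussianIntegral hb S (J * Q))) := by
  refine tendsto_integral_of_dominated_convergence
    (fun x => ‖eval x (J * Q) * gaussianWeight b x‖)
    (fun n => (integrableOn_comp_eval_mul hb hS hJ (hθ n) (hθ₁ n) _).aestronglyMeasurable)
    (integrable_eval_mul_gaussianWeight hb _).integrableOn.norm (fun n => ?_) ?_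
  · refine ae_restrict_of_forall_mem hS fun x hx => ?_
    rw [norm_mul]
    exact mul_le_of_le_one_left (norm_nonneg _) (hθ₁ n _ (hJ x hx))
  · refine ae_restrict_of_forall_mem hS fun x hx => ?_
    rcases (hJ x hx).eq_or_lt with h | h
    · simp [← h]
    · simpa using (hlim _ h).mul_const (eval x (J * Q) * gaussianWeight b x)

theorem indicator_comp_eval_mul_eval_mul (θ : ℝ → ℝ) (P Q : MvPolynomial ι ℝ) (x : ι → ℝ) :
    S.indicator (fun y => θ (eval y J) * eval y P) x * (eval x Q * gaussianWeight b x) =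
      S.indicator (fun y => θ (eval y J) * (eval y (P * Q) * gaussianWeight b y)) x := by
  by_cases hx : x ∈ S
  · simp only [Set.indicator_of_mem hx, map_mul]
    ring
  · simp only [Set.indicator_of_notMem hx, zero_mul]

-- `a ^ 2 / (a + ε)` is differentiable along the boundary of `S`, where `J` vanishes, and recovers
-- the density `J` as `ε → 0`.
theorem setIntegral_mul_eval_pderiv_sub (hb : 0 < b) (hS : IsClosed S)
    (hJ : ∀ x ∈ S, 0 ≤ eval x J) (hnhds : ∀ x ∈ S, eval x J ≠ 0 → S ∈ 𝓝 x) {ε : ℝ} (hε : 0 < ε)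
    (i : ι) (Q : MvPolynomial ι ℝ) :
    ∫ x in S, eval x J / (eval x J + ε) *
        (eval x (J * (pderiv i Q - C (2 * b) * (X i * Q))) * gaussianWeight b x) =
      -∫ x in S, (1 - (ε / (eval x J + ε)) ^ 2) *
        (eval x (pderiv i J * Q) * gaussianWeight b x) := by
  classical
  let θ : ℝ → ℝ := fun a => a / (a + ε)
  let θ' : ℝ → ℝ := fun a => 1 - (ε / (a + ε)) ^ 2
  have hr : ∀ x, HasLineDerivAt ℝ (S.indicator fun y => θ (eval y J) * eval y J)
      (S.indicator (fun y => θ' (eval y J) * eval y (pderiv i J)) x) x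
      (Pi.single i 1) := fun x => by
    have h := (hasFDerivAt_indicator_sq_div_add hS (hasFDerivAt_eval J x) hJ
      (hnhds x) hε).hasLineDerivAt (Pi.single i 1)
    simp only [pow_two (eval _ J), mul_div_right_comm] at h
    refine HasDerivAt.congr_deriv h ?_
    by_cases hx : x ∈ S <;> simp [θ', hx, Pi.single_apply]
  have hint {τ : ℝ → ℝ} (hτ : Measurable τ) (hτ₁ : ∀ a, 0 ≤ a → |τ a| ≤ 1)
      (P Q : MvPolynomial ι ℝ) : Integrable fun x =>
        S.indicator (fun y => τ (eval y J) * eval y P) x * (eval x Q * gaussianWeight b x) := by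
    simp only [indicator_comp_eval_mul_eval_mul τ]
    exact (integrable_indicator_iff hS.measurableSet).mpr
      (integrableOn_comp_eval_mul hb hS.measurableSet hJ hτ hτ₁ _)
  have hθ : ∀ P Q, _ := hint (τ := θ) (by fun_prop) fun a ha => abs_div_add_le_one ha hε
  have hθ' : ∀ P Q, _ := hint (τ := θ') (by fun_prop) fun a ha =>
    abs_one_sub_div_add_sq_le_one ha hε
  have h := integral_bilinear_hasLineDerivAt_right_eq_neg_left_of_integrable
    (B := ContinuousLinearMap.mul ℝ ℝ) (hθ' _ _) (hθ _ _) (hθ _ Q) (fun x _ => hr x)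
    fun x _ => hasLineDerivAt_eval_mul_gaussianWeight b Q i x
  simpa only [ContinuousLinearMap.mul_apply', indicator_comp_eval_mul_eval_mul,
    integral_indicator hS.measurableSet] using h

theorem setIntegral_mul_sum_eval (hb : 0 < b) (hS : MeasurableSet S)
    (hJ : ∀ x ∈ S, 0 ≤ eval x J) {θ : ℝ → ℝ} (hθ : Measurable θ) (hθ₁ : ∀ a, 0 ≤ a → |θ a| ≤ 1)
    (Q : ι → MvPolynomial ι ℝ) :
    ∫ x in S, θ (eval x J) * (eval x (∑ i, Q i) * gaussianWeight b x) =
      ∑ i, ∫ x in S, θ (eval x J) * (eval x (Q i) * gaussianWeight b x) := by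
  rw [← integral_finsetSum _ fun i _ => integrableOn_comp_eval_mul hb hS hJ hθ hθ₁ (Q i)]
  simp only [map_sum, Finset.sum_mul, Finset.mul_sum]

theorem tendsto_div_add_one_div_add_one {a : ℝ} (ha : 0 < a) :
    Tendsto (fun n : ℕ => a / (a + 1 / (n + 1))) atTop (𝓝 1) := by
  simpa [ha.ne', Pi.div_def] using (tendsto_const_nhds (x := a)).div
    (tendsto_one_div_add_atTop_nhds_zero_nat.const_add a) (by simpa using ha.ne')

theorem tendsto_one_sub_one_div_add_one_div_sq {a : ℝ} (ha : 0 < a) :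
    Tendsto (fun n : ℕ => 1 - ((1 / (n + 1)) / (a + 1 / (n + 1))) ^ 2) atTop (𝓝 (1 : ℝ)) := by
  simpa using ((tendsto_one_div_add_atTop_nhds_zero_nat.div
    (tendsto_one_div_add_atTop_nhds_zero_nat.const_add a) (by simpa using ha.ne')).pow 2).const_sub
    1

theorem two_mul_mul_gaussianIntegral_mul_of_mkDerivation_eq (hb : 0 < b) (hS : IsClosed S)
    (hJ : ∀ x ∈ S, 0 ≤ eval x J) (hnhds : ∀ x ∈ S, eval x J ≠ 0 → S ∈ 𝓝 x)
    {v : ι → MvPolynomial ι ℝ} {q : MvPolynomial ι ℝ} (hq : mkDerivation ℝ v J = J * q)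
    (f : MvPolynomial ι ℝ) :
    2 * b * gaussianIntegral hb S (J * ((∑ i, X i * v i) * f)) =
      gaussianIntegral hb S (J * ((∑ i, pderiv i (v i) + q) * f + mkDerivation ℝ v f)) := by
  have hε (n : ℕ) : 0 < 1 / ((n : ℝ) + 1) := Nat.one_div_pos_of_nat
  have hlhs : ∑ i, J * (pderiv i (v i * f) - C (2 * b) * (X i * (v i * f))) =
      J * ((∑ i, pderiv i (v i)) * f + mkDerivation ℝ v f -
        (2 * b) • ((∑ i, X i * v i) * f)) := by
    simp only [mkDerivation_eq_sum_mul_pderiv, Derivation.leibniz, smul_eq_mul, smul_eq_C_mul,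
      Finset.sum_mul, Finset.mul_sum, ← Finset.sum_add_distrib, ← Finset.sum_sub_distrib]
    exact Finset.sum_congr rfl fun i _ => by ring
  have hrhs : ∑ i, pderiv i J * (v i * f) = J * (q * f) := by
    rw [← mul_assoc, ← hq, mkDerivation_eq_sum_mul_pderiv, Finset.sum_mul]
    exact Finset.sum_congr rfl fun i _ => by ring
  have hreg (n : ℕ) := Finset.sum_congr rfl fun i (_ : i ∈ Finset.univ) =>
    setIntegral_mul_eval_pderiv_sub hb hS hJ hnhds (hε n) i (v i * f)
  have hbound (n : ℕ) (a : ℝ) (ha : 0 ≤ a) := abs_div_add_le_one ha (hε n)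
  have hbound' (n : ℕ) (a : ℝ) (ha : 0 ≤ a) := abs_one_sub_div_add_sq_le_one ha (hε n)
  simp only [Finset.sum_neg_distrib,
    ← setIntegral_mul_sum_eval hb hS.measurableSet hJ (by fun_prop) (hbound _),
    ← setIntegral_mul_sum_eval hb hS.measurableSet hJ (by fun_prop) (hbound' _),
    hlhs, hrhs] at hreg
  have hlim := tendsto_nhds_unique
    ((tendsto_setIntegral_comp_eval_mul hb hS.measurableSet hJ (by fun_prop) hbound
      (fun _ => tendsto_div_add_one_div_add_one) _).congr hreg)
    (tendsto_setIntegral_comp_eval_mul hb hS.measurableSet hJ (by fun_prop) hbound'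
      (fun _ => tendsto_one_sub_one_div_add_one_div_sq) (q * f)).neg
  simp only [mul_sub, mul_add, add_mul, map_sub, map_add, mul_smul_comm, map_smul,
    smul_eq_mul] at hlim ⊢
  linarith

theorem two_mul_mul_gaussianIntegral_univ_X_mul (hb : 0 < b) (i : ι) (f : MvPolynomial ι ℝ) :
    2 * b * gaussianIntegral hb Set.univ (X i * f) =
      gaussianIntegral hb Set.univ (pderiv i f) := by
  classical
  have h := two_mul_mul_gaussianIntegral_mul_of_mkDerivation_eq hb isClosed_univ (J := 1)
    (by simp) (by simp) (v := Pi.single i 1) (q := 0) (by simp) f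
  simpa [Pi.single_apply, mkDerivation_eq_sum_mul_pderiv, apply_ite (pderiv _)] using h

end IntegrationByParts

section SingularValueCone

/-- The set of possible lists of `p` singular values. -/
def singularValueCone (p : ℕ) : Set (Fin p → ℝ) :=
  {x | Antitone x ∧ ∀ i, 0 ≤ x i}

variable {p : ℕ}

theorem isClosed_singularValueCone (p : ℕ) : IsClosed (singularValueCone p) :=
  isClosed_antitone.inter <| isClosed_le (f := fun _ => 0) continuous_const continuous_id

theorem smul_mem_singularValueCone_iff {s : ℝ} (hs : 0 < s) (x : Fin p → ℝ) :
    s • x ∈ singularValueCone p ↔ x ∈ singularValueCone p := by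
  simp only [singularValueCone, Set.mem_ofPred_eq, Antitone, Pi.smul_apply, smul_eq_mul,
    mul_le_mul_iff_right₀ hs, mul_nonneg_iff_of_pos_left hs]

theorem mem_nhds_singularValueCone {x : Fin p → ℝ} (hx : StrictAnti x) (hpos : ∀ i, 0 < x i) :
    singularValueCone p ∈ 𝓝 x := by
  have hanti : ∀ᶠ y in 𝓝 x, ∀ i j, i < j → y j < y i := by
    simp only [eventually_all]
    exact fun i j hij =>
      (continuous_apply j).continuousAt.eventually_lt (continuous_apply i).continuousAt (hx hij)
  have hpos' : ∀ᶠ y in 𝓝 x, ∀ i, 0 < y i :=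
    eventually_all.mpr fun i => (continuous_apply i).continuousAt.eventually_const_lt (hpos i)
  filter_upwards [hanti, hpos'] with y hy hy'
  exact ⟨StrictAnti.antitone fun i j => hy i j, fun i => (hy' i).le⟩

theorem eval_svdJacobian (M : ℕ) (x : Fin p → ℝ) : eval x (svdJacobian ℝ M p) =
    (∏ i, x i ^ M) * ∏ i, ∏ j ∈ Finset.Ioi i, (x i ^ 2 - x j ^ 2) := by
  simp [svdJacobian]

theorem eval_svdJacobian_nonneg (M : ℕ) {x : Fin p → ℝ} (hx : x ∈ singularValueCone p) :
    0 ≤ eval x (svdJacobian ℝ M p) := by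
  rw [eval_svdJacobian]
  exact mul_nonneg (Finset.prod_nonneg fun i _ => pow_nonneg (hx.2 i) _)
    (Finset.prod_nonneg fun i _ => Finset.prod_nonneg fun j hj =>
      sub_nonneg.mpr (pow_le_pow_left₀ (hx.2 j) (hx.1 (Finset.mem_Ioi.mp hj).le) 2))

theorem eval_svdJacobian_pos (M : ℕ) {x : Fin p → ℝ} (hx : StrictAnti x) (hpos : ∀ i, 0 < x i) :
    0 < eval x (svdJacobian ℝ M p) := by
  rw [eval_svdJacobian]
  exact mul_pos (Finset.prod_pos fun i _ => pow_pos (hpos i) _)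
    (Finset.prod_pos fun i _ => Finset.prod_pos fun j hj =>
      sub_pos.mpr (pow_lt_pow_left₀ (hx (Finset.mem_Ioi.mp hj)) (hpos j).le two_ne_zero))

theorem strictAnti_and_pos_of_eval_svdJacobian_ne_zero {M : ℕ} (hM : M ≠ 0) {x : Fin p → ℝ}
    (hx : x ∈ singularValueCone p) (hJ : eval x (svdJacobian ℝ M p) ≠ 0) :
    StrictAnti x ∧ ∀ i, 0 < x i := by
  simp only [eval_svdJacobian, mul_ne_zero_iff, Finset.prod_ne_zero_iff, Finset.mem_univ,
    forall_const, Finset.mem_Ioi] at hJ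
  refine ⟨fun i j hij => (hx.1 hij.le).lt_of_ne fun h => hJ.2 i j hij ?_,
    fun i => (hx.2 i).lt_of_ne fun h => hJ.1 i ?_⟩
  · rw [h, sub_self]
  · rw [← h, zero_pow hM]

theorem isHomogeneous_svdJacobian (M p : ℕ) :
    (svdJacobian ℝ M p).IsHomogeneous (p * M + p * (p - 1)) := by
  have hsum : ∑ i : Fin p, ∑ _j ∈ Finset.Ioi i, 2 = p * (p - 1) := by
    simp only [Finset.sum_const, Fin.card_Ioi, smul_eq_mul, ← Finset.sum_mul]
    rw [Fin.sum_univ_eq_sum_range (fun i => p - 1 - i) p, Finset.sum_range_reflect (fun i => i) p,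
      Finset.sum_range_id_mul_two]
  have hM : ∑ _i : Fin p, M = p * M := by simp
  rw [← hsum, ← hM]
  exact (IsHomogeneous.prod _ _ _ fun i _ => isHomogeneous_X_pow i M).mul
    (IsHomogeneous.prod _ _ _ fun i _ => IsHomogeneous.prod _ _ _ fun j _ =>
      (isHomogeneous_X_pow i 2).sub (isHomogeneous_X_pow j 2))

theorem gaussianIntegral_svdJacobian_pos (M p : ℕ) {b : ℝ} (hb : 0 < b) :
    0 < gaussianIntegral hb (singularValueCone p) (svdJacobian ℝ M p) := by
  have hanti : StrictAnti fun i : Fin p => (p : ℝ) - i := fun i j hij =>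
    sub_lt_sub_left (Nat.cast_lt.mpr hij) _
  have hpos : ∀ i : Fin p, 0 < (p : ℝ) - i := fun i => sub_pos.mpr (Nat.cast_lt.mpr i.2)
  exact gaussianIntegral_pos hb (isClosed_singularValueCone p).measurableSet
    (fun _ => eval_svdJacobian_nonneg M) (mem_nhds_singularValueCone hanti hpos)
    (eval_svdJacobian_pos M hanti hpos).ne'

theorem gaussianIntegral_tracePowers_mul {M : ℕ} (hM : M ≠ 0) (p : ℕ) {b : ℝ} (hb : 0 < b)
    (f : MvPolynomial ℕ ℝ) :
    gaussianIntegral hb (singularValueCone p) (svdJacobian ℝ M p) *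
        gaussianIntegral hb Set.univ (tracePowers (Fin (M + p)) (Fin p) ℝ f) =
      gaussianIntegral hb Set.univ (1 : MvPolynomial (Fin (M + p) × Fin p) ℝ) *
        gaussianIntegral hb (singularValueCone p) (svdJacobian ℝ M p * evenPowerSums ℝ p f) := by
  let K := gaussianIntegral hb (singularValueCone p) ∘ₗ LinearMap.mulLeft ℝ (svdJacobian ℝ M p)
  have hF := comp_tracePowers_mem_loopFunctionals (ι := Fin (M + p)) (κ := Fin p)
    (two_mul_mul_gaussianIntegral_univ_X_mul hb)
  have hK : K ∘ₗ (evenPowerSums ℝ p).toLinearMap ∈ loopFunctionals ℝ (M + p) p (2 * b) :=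
    comp_evenPowerSums_mem_loopFunctionals fun v q hq f =>
      two_mul_mul_gaussianIntegral_mul_of_mkDerivation_eq hb (isClosed_singularValueCone p)
        (fun x => eval_svdJacobian_nonneg M) (fun x hx hJ =>
          have h := strictAnti_and_pos_of_eval_svdJacobian_ne_zero hM hx hJ
          mem_nhds_singularValueCone h.1 h.2) hq f
  rw [Fintype.card_fin, Fintype.card_fin] at hF
  have h := LinearMap.congr_fun
    (smul_eq_smul_of_mem_loopFunctionals (by positivity : 2 * b ≠ 0) hF hK) f
  simpa [K] using h

theorem exists_gaussianIntegral_tracePowers_eq {M : ℕ} (hM : M ≠ 0) (p : ℕ) :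
    ∃ κ : ℝ, 0 < κ ∧ ∀ (b : ℝ) (hb : 0 < b) (f : MvPolynomial ℕ ℝ),
      gaussianIntegral hb Set.univ (tracePowers (Fin (M + p)) (Fin p) ℝ f) =
        κ * gaussianIntegral hb (singularValueCone p)
          (svdJacobian ℝ M p * evenPowerSums ℝ p f) := by
  have hE : ∀ {b : ℝ} (hb : 0 < b),
      0 < gaussianIntegral hb Set.univ (1 : MvPolynomial (Fin (M + p) × Fin p) ℝ) := fun hb =>
    gaussianIntegral_pos hb .univ (by simp) (x := 0) univ_mem (by simp)
  refine ⟨_, div_pos (hE one_pos) (gaussianIntegral_svdJacobian_pos M p one_pos), fun b hb f => ?_⟩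
  have hEb := sqrt_pow_mul_gaussianIntegral hb .univ (by simp)
    (isHomogeneous_one (Fin (M + p) × Fin p) ℝ)
  have hKb := sqrt_pow_mul_gaussianIntegral hb (isClosed_singularValueCone p).measurableSet
    (fun s hs => smul_mem_singularValueCone_iff hs) (isHomogeneous_svdJacobian M p)
  have hdeg : p + (p * M + p * (p - 1)) = (M + p) * p := by
    cases p <;> simp; ring
  simp only [Fintype.card_prod, Fintype.card_fin, add_zero] at hEb
  rw [Fintype.card_fin, hdeg] at hKb
  have hs : √b ^ ((M + p) * p) ≠ 0 := pow_ne_zero _ (Real.sqrt_pos.mpr hb).ne'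
  have hK := (gaussianIntegral_svdJacobian_pos M p hb).ne'
  rw [← hEb, ← hKb, mul_div_mul_left _ _ hs, div_mul_eq_mul_div, eq_div_iff hK, mul_comm,
    gaussianIntegral_tracePowers_mul hM]

end SingularValueCone

section EvenPowerSums

theorem linearIndependent_pow_fun (K : Type*) [CommRing K] [IsDomain K] :
    LinearIndependent K fun (t : K) (m : ℕ) => t ^ m :=
  (linearIndependent_monoidHom (Multiplicative ℕ) K).comp (powersHom K) (powersHom K).injective

theorem multiset_eq_of_sum_map_pow_eq {K : Type*} [CommRing K] [IsDomain K] [CharZero K]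
    {s t : Multiset K} (h : ∀ m : ℕ, (s.map (· ^ m)).sum = (t.map (· ^ m)).sum) : s = t := by
  classical
  have hcount : ∀ (u : Multiset K) (a : K),
      (u.map fun b => Finsupp.single b (1 : K)).sum a = (u.count a : K) := fun u a => by
    induction u using Multiset.induction with
    | empty => simp
    | cons b u ih => simp [ih, Finsupp.single_apply, Multiset.count_cons, eq_comm, add_comm]
  have hcomb : ∀ u : Multiset K, Finsupp.linearCombination K (fun (t : K) (m : ℕ) => t ^ m)
      (u.map fun b => Finsupp.single b (1 : K)).sum = fun m => (u.map (· ^ m)).sum := fun u => by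
    induction u using Multiset.induction with
    | empty => ext; simp
    | cons b u ih => ext m; simp [ih]
  have hst := linearIndependent_pow_fun K ((hcomb s).trans ((funext h).trans (hcomb t).symm))
  exact Multiset.ext.mpr fun a => Nat.cast_injective (R := K) <| by
    rw [← hcount, ← hcount, hst]

theorem eq_of_sum_even_pow_eq {p : ℕ} {x y : Fin p → ℝ} (hx : x ∈ singularValueCone p)
    (hy : y ∈ singularValueCone p) (h : ∀ m : ℕ, ∑ i, x i ^ (2 * m) = ∑ i, y i ^ (2 * m)) :
    x = y := by
  have hperm : (List.ofFn fun i => x i ^ 2).Perm (List.ofFn fun i => y i ^ 2) := by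
    rw [← Multiset.coe_eq_coe, ← Fin.univ_val_map, ← Fin.univ_val_map]
    refine multiset_eq_of_sum_map_pow_eq fun m => ?_
    simp only [Multiset.map_map, Function.comp_def, ← pow_mul]
    exact h m
  have hanti : ∀ z ∈ singularValueCone p, Antitone fun i => z i ^ 2 := fun z hz i j hij =>
    pow_le_pow_left₀ (hz.2 j) (hz.1 hij) 2
  have hsq := List.ofFn_injective
    (hperm.eq_of_sortedGE (hanti x hx).sortedGE_ofFn (hanti y hy).sortedGE_ofFn)
  exact funext fun i => (pow_left_inj₀ (hx.2 i) (hy.2 i) two_ne_zero).mp (congrFun hsq i)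

theorem eval_evenPowerSums {R : Type*} [CommRing R] {p : ℕ} (x : Fin p → R)
    (f : MvPolynomial ℕ R) :
    eval x (evenPowerSums R p f) = eval (fun m => ∑ i, x i ^ (2 * m)) f := by
  simp only [evenPowerSums, ← coe_aeval_eq_eval, RingHom.coe_coe, comp_aeval_apply, map_sum,
    map_pow, aeval_X]

end EvenPowerSums

section UniquenessOfMeasures

variable {E : Type*} [TopologicalSpace E] [PolishSpace E] [MeasurableSpace E] [BorelSpace E]

open BoundedContinuousFunction in
theorem measure_eq_of_forall_mem_subalgebra_integral_eq {μ ν : Measure E} [IsFiniteMeasure μ]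
    [IsFiniteMeasure ν] (A : Subalgebra ℝ (E → ℝ))
    (hsep : ∀ x y, x ≠ y → ∃ f ∈ A, Continuous f ∧ (∃ C, ∀ z, |f z| ≤ C) ∧ f x ≠ f y)
    (h : ∀ f ∈ A, ∫ x, f x ∂μ = ∫ x, f x ∂ν) : μ = ν := by
  let S : StarSubalgebra ℝ (E →ᵇ ℝ) :=
    { carrier := {f | ⇑f ∈ A}
      mul_mem' := A.mul_mem
      add_mem' := A.add_mem
      algebraMap_mem' := A.algebraMap_mem
      star_mem' := fun hf => hf }
  refine ext_of_forall_mem_subalgebra_integral_eq_of_polish (𝕜 := ℝ) (A := S) ?_ fun f hf => h f hf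
  rintro x y hxy
  obtain ⟨f, hfA, hf, ⟨C, hC⟩, hfxy⟩ := hsep x y hxy
  let F : E →ᵇ ℝ := ofNormedAddCommGroup f hf C hC
  exact ⟨f, ⟨toContinuousMapStarₐ ℝ F, ⟨F, hfA, rfl⟩, rfl⟩, hfxy⟩

theorem measure_eq_of_forall_mem_subalgebra_integral_eq_of_ae_mem {μ ν : Measure E}
    [IsFiniteMeasure μ] [IsFiniteMeasure ν] {s : Set E} (hs : IsClosed s)
    (hμ : ∀ᵐ x ∂μ, x ∈ s) (hν : ∀ᵐ x ∂ν, x ∈ s) (A : Subalgebra ℝ (E → ℝ))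
    (hsep : ∀ x ∈ s, ∀ y ∈ s, x ≠ y →
      ∃ f ∈ A, Continuous f ∧ (∃ C, ∀ z, |f z| ≤ C) ∧ f x ≠ f y)
    (h : ∀ f ∈ A, ∫ x, f x ∂μ = ∫ x, f x ∂ν) : μ = ν := by
  have : PolishSpace s := hs.polishSpace
  have hm := hs.measurableSet
  have hcomap : μ.comap ((↑) : s → E) = ν.comap (↑) := by
    refine measure_eq_of_forall_mem_subalgebra_integral_eq
      (A.map (AlgHom.pi fun x : s => Pi.evalAlgHom ℝ _ x.1)) (fun x y hxy => ?_) ?_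
    · obtain ⟨f, hfA, hf, ⟨C, hC⟩, hfxy⟩ := hsep x x.2 y y.2 fun h => hxy (Subtype.ext h)
      exact ⟨f ∘ (↑), ⟨f, hfA, rfl⟩, hf.comp continuous_subtype_val, ⟨C, fun z => hC z⟩, hfxy⟩
    · rintro _ ⟨f, hfA, rfl⟩
      have := h f hfA
      rwa [← Measure.restrict_eq_self_of_ae_mem hμ, ← Measure.restrict_eq_self_of_ae_mem hν,
        ← integral_subtype_comap hm, ← integral_subtype_comap hm] at this
  have := congrArg (Measure.map ((↑) : s → E)) hcomap
  rwa [map_comap_subtype_coe hm, map_comap_subtype_coe hm,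
    Measure.restrict_eq_self_of_ae_mem hμ, Measure.restrict_eq_self_of_ae_mem hν] at this

end UniquenessOfMeasures

section GaussianTestFunctions

variable {ι : Type*} [Fintype ι]

theorem gaussianWeight_mul_gaussianWeight (b c : ℝ) (x : ι → ℝ) :
    gaussianWeight b x * gaussianWeight c x = gaussianWeight (b + c) x := by
  rw [gaussianWeight, gaussianWeight, gaussianWeight, ← Real.exp_add, neg_add, add_mul]

theorem gaussianWeight_one_pow (n : ℕ) (x : ι → ℝ) :
    gaussianWeight 1 x ^ n = gaussianWeight n x := by
  rw [gaussianWeight, gaussianWeight, ← Real.exp_nat_mul, neg_one_mul, neg_mul, mul_neg]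

theorem sum_even_pow_mul_gaussianWeight_le (m : ℕ) (x : ι → ℝ) :
    (∑ i, x i ^ (2 * m)) * gaussianWeight 1 x ≤ Fintype.card ι * m.factorial := by
  set s := ∑ i, x i ^ 2
  have hs0 : 0 ≤ s := Finset.sum_nonneg fun i _ => sq_nonneg _
  have hterm : ∀ i, x i ^ (2 * m) ≤ m.factorial * Real.exp s := fun i => by
    have hexp := Real.pow_div_factorial_le_exp s hs0 m
    rw [div_le_iff₀ (by positivity), mul_comm] at hexp
    rw [pow_mul]
    exact (pow_le_pow_left₀ (sq_nonneg _) (Finset.single_le_sum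
      (f := fun i => x i ^ 2) (fun i _ => sq_nonneg _) (Finset.mem_univ i)) m).trans hexp
  calc (∑ i, x i ^ (2 * m)) * gaussianWeight 1 x
      ≤ (∑ _i : ι, m.factorial * Real.exp s) * Real.exp (-s) := by
        rw [gaussianWeight, neg_one_mul]
        gcongr with i
        exact hterm i
    _ = Fintype.card ι * m.factorial := by
        rw [Finset.sum_const, Finset.card_univ, nsmul_eq_mul, mul_assoc, mul_assoc,
          ← Real.exp_add, add_neg_cancel, Real.exp_zero, mul_one]

/-- The algebra of functions `∑ₙ fₙ(x) exp(-n ‖x‖²)`, where the `fₙ` are polynomials in the even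
power sums. Its bounded elements separate the points of the singular value cone. -/
noncomputable def gaussianTestAlgebra (p : ℕ) : Subalgebra ℝ ((Fin p → ℝ) → ℝ) :=
  (AlgHom.pi fun x => Polynomial.eval₂AlgHom ((aeval x).comp (evenPowerSums ℝ p))
    (gaussianWeight 1 x) fun _ => Commute.all _ _).range

variable {p : ℕ}

theorem mem_gaussianTestAlgebra_iff {F : (Fin p → ℝ) → ℝ} : F ∈ gaussianTestAlgebra p ↔
    ∃ q : Polynomial (MvPolynomial ℕ ℝ), F = fun x =>
      ∑ n ∈ q.support, eval x (evenPowerSums ℝ p (q.coeff n)) * gaussianWeight n x := by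
  refine exists_congr fun q => ?_
  rw [eq_comm]
  refine Eq.congr_right (funext fun x => ?_)
  simp [Polynomial.eval₂_eq_sum, Polynomial.sum_def, ← gaussianWeight_one_pow]

theorem sum_even_pow_mul_gaussianWeight_mem_gaussianTestAlgebra (m : ℕ) :
    (fun x => (∑ i, x i ^ (2 * m)) * gaussianWeight 1 x) ∈ gaussianTestAlgebra p :=
  ⟨Polynomial.C (X m) * Polynomial.X, by ext; simp [evenPowerSums_X]⟩

theorem exists_mem_gaussianTestAlgebra_ne {x y : Fin p → ℝ} (hx : x ∈ singularValueCone p)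
    (hy : y ∈ singularValueCone p) (hxy : x ≠ y) :
    ∃ F ∈ gaussianTestAlgebra p, Continuous F ∧ (∃ C, ∀ z, |F z| ≤ C) ∧ F x ≠ F y := by
  have : NeZero p := ⟨by rintro rfl; exact hxy (Subsingleton.elim _ _)⟩
  suffices ∃ m : ℕ, (∑ i, x i ^ (2 * m)) * gaussianWeight 1 x ≠
      (∑ i, y i ^ (2 * m)) * gaussianWeight 1 y by
    obtain ⟨m, hm⟩ := this
    refine ⟨_, sum_even_pow_mul_gaussianWeight_mem_gaussianTestAlgebra m, ?_,
      ⟨_, fun z => (abs_of_nonneg ?_).trans_le (sum_even_pow_mul_gaussianWeight_le m z)⟩, hm⟩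
    · exact Continuous.mul (by fun_prop) (continuous_gaussianWeight 1)
    · exact mul_nonneg (Finset.sum_nonneg fun i _ => (even_two_mul m).pow_nonneg _)
        (gaussianWeight_pos 1 z).le
  by_contra! h
  have hweight : gaussianWeight 1 x = gaussianWeight 1 y := by
    simpa [NeZero.ne p] using h 0
  refine hxy (eq_of_sum_even_pow_eq hx hy fun m => ?_)
  have hm := h m
  rw [hweight] at hm
  exact mul_right_cancel₀ (gaussianWeight_pos 1 y).ne' hm

theorem measure_eq_of_integral_evenPowerSums_mul_gaussianWeight_eq {μ ν : Measure (Fin p → ℝ)}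
    [IsFiniteMeasure μ] [IsFiniteMeasure ν] (hμ : ∀ᵐ x ∂μ, x ∈ singularValueCone p)
    (hν : ∀ᵐ x ∂ν, x ∈ singularValueCone p)
    (hintμ : ∀ (n : ℕ) f,
      Integrable (fun x => eval x (evenPowerSums ℝ p f) * gaussianWeight n x) μ)
    (hintν : ∀ (n : ℕ) f,
      Integrable (fun x => eval x (evenPowerSums ℝ p f) * gaussianWeight n x) ν)
    (h : ∀ (n : ℕ) f, ∫ x, eval x (evenPowerSums ℝ p f) * gaussianWeight n x ∂μ =
      ∫ x, eval x (evenPowerSums ℝ p f) * gaussianWeight n x ∂ν) : μ = ν := by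
  refine measure_eq_of_forall_mem_subalgebra_integral_eq_of_ae_mem (isClosed_singularValueCone p)
    hμ hν (gaussianTestAlgebra p) (fun x hx y hy => exists_mem_gaussianTestAlgebra_ne hx hy) ?_
  intro F hF
  obtain ⟨q, rfl⟩ := mem_gaussianTestAlgebra_iff.mp hF
  rw [integral_finsetSum _ fun n _ => hintμ n _, integral_finsetSum _ fun n _ => hintν n _]
  exact Finset.sum_congr rfl fun n _ => h n _

end GaussianTestFunctions

section WithDensity

variable {α : Type*} [MeasurableSpace α] {μ : Measure α} {ρ : α → ℝ}

theorem integral_withDensity_ofReal (hρ : Measurable ρ) (hρ0 : ∀ x, 0 ≤ ρ x) (F : α → ℝ) :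
    ∫ x, F x ∂(μ.withDensity fun x => ENNReal.ofReal (ρ x)) = ∫ x, ρ x * F x ∂μ := by
  rw [integral_withDensity_eq_integral_toReal_smul hρ.ennreal_ofReal
    (.of_forall fun _ => ENNReal.ofReal_lt_top)]
  simp only [ENNReal.toReal_ofReal (hρ0 _), smul_eq_mul]

theorem integrable_withDensity_ofReal_iff (hρ : Measurable ρ) (hρ0 : ∀ x, 0 ≤ ρ x) {F : α → ℝ} :
    Integrable F (μ.withDensity fun x => ENNReal.ofReal (ρ x)) ↔
      Integrable (fun x => ρ x * F x) μ := by
  rw [integrable_withDensity_iff_integrable_smul' hρ.ennreal_ofReal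
    (.of_forall fun _ => ENNReal.ofReal_lt_top)]
  simp only [ENNReal.toReal_ofReal (hρ0 _), smul_eq_mul]

theorem pi_withDensity_ofReal {ι : Type*} [Fintype ι] {X : ι → Type*}
    [∀ i, MeasurableSpace (X i)] {μ : ∀ i, Measure (X i)} [∀ i, SigmaFinite (μ i)]
    {ρ : ∀ i, X i → ℝ} (hρ : ∀ i, Integrable (ρ i) (μ i)) (hρ0 : ∀ i x, 0 ≤ ρ i x) :
    Measure.pi (fun i => (μ i).withDensity fun x => ENNReal.ofReal (ρ i x)) =
      (Measure.pi μ).withDensity fun x => ENNReal.ofReal (∏ i, ρ i (x i)) := by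
  have (i : ι) : IsFiniteMeasure ((μ i).withDensity fun x => ENNReal.ofReal (ρ i x)) :=
    isFiniteMeasure_withDensity_ofReal (hρ i).2
  refine Measure.pi_eq fun s hs => ?_
  have hind : (Set.univ.pi s).indicator (fun x => ∏ i, ρ i (x i)) =
      fun x => ∏ i, (s i).indicator (ρ i) (x i) := by
    ext x
    by_cases hx : x ∈ Set.univ.pi s
    · rw [Set.indicator_of_mem hx]
      exact Finset.prod_congr rfl fun i _ => (Set.indicator_of_mem (hx i trivial) _).symm
    · obtain ⟨i, hi⟩ : ∃ i, x i ∉ s i := by simpa [Set.mem_pi] using hx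
      rw [Set.indicator_of_notMem hx,
        Finset.prod_eq_zero (Finset.mem_univ i) (Set.indicator_of_notMem hi _)]
  rw [withDensity_apply _ (.univ_pi hs), ← ofReal_integral_eq_lintegral_ofReal
    (Integrable.fintype_prod_dep hρ).integrableOn
    (.of_forall fun x => Finset.prod_nonneg fun i _ => hρ0 i _),
    ← integral_indicator (.univ_pi hs), hind, integral_fintype_prod_eq_prod,
    ENNReal.ofReal_prod_of_nonneg fun i _ =>
      integral_nonneg fun x => Set.indicator_nonneg (fun x _ => hρ0 i x) x]
  refine Finset.prod_congr rfl fun i _ => ?_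
  rw [withDensity_apply _ (hs i), ← ofReal_integral_eq_lintegral_ofReal (hρ i).integrableOn
    (.of_forall (hρ0 i)), integral_indicator (hs i)]

theorem pi_gaussianReal_zero_eq_withDensity (ι : Type*) [Fintype ι] {v : NNReal} (hv : v ≠ 0) :
    Measure.pi (fun _ : ι => gaussianReal 0 v) = (volume : Measure (ι → ℝ)).withDensity fun x =>
      ENNReal.ofReal ((√(2 * Real.pi * v))⁻¹ ^ Fintype.card ι *
        gaussianWeight (1 / (2 * v)) x) := by
  simp only [gaussianReal_of_var_ne_zero _ hv]
  refine (pi_withDensity_ofReal (fun _ => integrable_gaussianPDFReal 0 v)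
    fun _ => gaussianPDFReal_nonneg 0 v).trans ?_
  refine congrArg _ (funext fun x => congrArg _ ?_)
  rw [gaussianWeight_eq_prod, ← Finset.card_univ, ← Finset.prod_const, ← Finset.prod_mul_distrib]
  refine Finset.prod_congr rfl fun i _ => ?_
  rw [gaussianPDFReal, sub_zero]
  ring_nf

end WithDensity

theorem gaussianWeight_uncurry {m n : Type*} [Fintype m] [Fintype n] (b : ℝ) (Y : Matrix m n ℝ) :
    gaussianWeight b (fun ij : m × n => Y ij.1 ij.2) = Real.exp (-b * trace (Yᵀ * Y)) := by
  simp only [gaussianWeight, trace, diag, mul_apply, transpose_apply, Fintype.sum_prod_type, ← sq]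
  rw [Finset.sum_comm]

section SingularValueDecomposition

variable {R m n : Type*} [CommRing R] [Fintype m] [Fintype n] [DecidableEq n]
  {Y U : Matrix m n R} {V : Matrix n n R} {d : n → R}

theorem gram_pow_eq_of_svd (hU : Uᵀ * U = 1) (hV : Vᵀ * V = 1) (hY : Y = U * diagonal d * Vᵀ)
    (l : ℕ) : (Yᵀ * Y) ^ l = V * diagonal (fun i => d i ^ (2 * l)) * Vᵀ := by
  have hgram : Yᵀ * Y = V * diagonal (fun i => d i ^ 2) * Vᵀ := by
    calc Yᵀ * Y = V * diagonal d * (Uᵀ * U) * diagonal d * Vᵀ := by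
          simp only [hY, transpose_mul, transpose_transpose, diagonal_transpose, Matrix.mul_assoc]
      _ = V * diagonal (fun i => d i ^ 2) * Vᵀ := by
          rw [hU, Matrix.mul_one, Matrix.mul_assoc V, diagonal_mul_diagonal]
          simp only [sq]
  induction l with
  | zero => simp [mul_eq_one_comm.mp hV]
  | succ l ih =>
    calc (Yᵀ * Y) ^ (l + 1)
        = V * diagonal (fun i => d i ^ (2 * l)) * (Vᵀ * V) * diagonal (fun i => d i ^ 2) * Vᵀ := by
          rw [pow_succ, ih, hgram]
          simp only [Matrix.mul_assoc]
      _ = V * diagonal (fun i => d i ^ (2 * (l + 1))) * Vᵀ := by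
          rw [hV, Matrix.mul_one, Matrix.mul_assoc V, diagonal_mul_diagonal]
          simp only [← pow_add, mul_add_one]

theorem trace_gram_pow_eq_of_svd (hU : Uᵀ * U = 1) (hV : Vᵀ * V = 1)
    (hY : Y = U * diagonal d * Vᵀ) (l : ℕ) : trace ((Yᵀ * Y) ^ l) = ∑ i, d i ^ (2 * l) := by
  rw [gram_pow_eq_of_svd hU hV hY, trace_mul_comm, ← Matrix.mul_assoc, hV, Matrix.one_mul,
    trace_diagonal]

theorem eval_tracePowers (Y : Matrix m n R) (f : MvPolynomial ℕ R) :
    eval (fun ij => Y ij.1 ij.2) (tracePowers m n R f) =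
      eval (fun l => trace ((Yᵀ * Y) ^ l)) f := by
  have hX : (mvPolynomialX m n R).map (eval fun ij => Y ij.1 ij.2) = Y := by
    ext; simp
  have htrace : ∀ l : ℕ, eval (fun ij => Y ij.1 ij.2) (trace (genericGram m n R ^ l)) =
      trace ((Yᵀ * Y) ^ l) := fun l => by
    rw [AddMonoidHom.map_trace, Matrix.map_pow, genericGram, Matrix.map_mul, Matrix.transpose_map,
      hX]
  simp only [tracePowers, ← coe_aeval_eq_eval, RingHom.coe_coe, comp_aeval_apply] at htrace ⊢
  simp only [htrace]

end SingularValueDecomposition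

section PolynomialGaussianDensity

variable {ι : Type*} [Fintype ι] {S : Set (ι → ℝ)} {J : MvPolynomial ι ℝ} {b : ℝ}

/-- The unnormalised density on `S` of the form polynomial times Gaussian weight. -/
noncomputable def polynomialGaussianDensity (S : Set (ι → ℝ)) (J : MvPolynomial ι ℝ) (b : ℝ)
    (x : ι → ℝ) : ℝ :=
  S.indicator (fun x => eval x J * gaussianWeight b x) x

theorem measurable_polynomialGaussianDensity (hS : MeasurableSet S) (J : MvPolynomial ι ℝ)
    (b : ℝ) : Measurable (polynomialGaussianDensity S J b) :=
  ((MvPolynomial.continuous_eval J).mul (continuous_gaussianWeight b)).measurable.indicator hS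

theorem polynomialGaussianDensity_nonneg (hJ : ∀ x ∈ S, 0 ≤ eval x J) (b : ℝ) (x : ι → ℝ) :
    0 ≤ polynomialGaussianDensity S J b x :=
  Set.indicator_nonneg (fun x hx => mul_nonneg (hJ x hx) (gaussianWeight_pos b x).le) x

theorem integrable_polynomialGaussianDensity (hb : 0 < b) (hS : MeasurableSet S)
    (J : MvPolynomial ι ℝ) : Integrable (polynomialGaussianDensity S J b) :=
  (integrable_eval_mul_gaussianWeight hb J).indicator hS

theorem polynomialGaussianDensity_C_mul (S : Set (ι → ℝ)) (c : ℝ) (J : MvPolynomial ι ℝ) (b : ℝ)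
    (x : ι → ℝ) :
    polynomialGaussianDensity S (C c * J) b x = c * polynomialGaussianDensity S J b x := by
  by_cases hx : x ∈ S <;> simp [polynomialGaussianDensity, hx, mul_assoc]

theorem polynomialGaussianDensity_mul_gaussianWeight (S : Set (ι → ℝ)) (J Q : MvPolynomial ι ℝ)
    (b c : ℝ) (x : ι → ℝ) :
    polynomialGaussianDensity S J b x * (eval x Q * gaussianWeight c x) =
      polynomialGaussianDensity S (J * Q) (b + c) x := by
  by_cases hx : x ∈ S
  · simp only [polynomialGaussianDensity, Set.indicator_of_mem hx, map_mul,
      ← gaussianWeight_mul_gaussianWeight b c x]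
    ring
  · simp [polynomialGaussianDensity, hx]

theorem integral_polynomialGaussianDensity (hb : 0 < b) (hS : MeasurableSet S)
    (J : MvPolynomial ι ℝ) :
    ∫ x, polynomialGaussianDensity S J b x = gaussianIntegral hb S J :=
  integral_indicator hS

/-- The measure with density `polynomialGaussianDensity S J b`. -/
noncomputable def polynomialGaussianMeasure (S : Set (ι → ℝ)) (J : MvPolynomial ι ℝ) (b : ℝ) :
    Measure (ι → ℝ) :=
  volume.withDensity fun x => ENNReal.ofReal (polynomialGaussianDensity S J b x)

theorem isFiniteMeasure_polynomialGaussianMeasure (hb : 0 < b) (hS : MeasurableSet S)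
    (J : MvPolynomial ι ℝ) : IsFiniteMeasure (polynomialGaussianMeasure S J b) :=
  isFiniteMeasure_withDensity_ofReal (integrable_polynomialGaussianDensity hb hS J).2

theorem ae_mem_polynomialGaussianMeasure (hS : MeasurableSet S) (J : MvPolynomial ι ℝ) (b : ℝ) :
    ∀ᵐ x ∂(polynomialGaussianMeasure S J b), x ∈ S := by
  rw [polynomialGaussianMeasure,
    ae_withDensity_iff (measurable_polynomialGaussianDensity hS J b).ennreal_ofReal]
  refine .of_forall fun x hx => by_contra fun hxS => hx ?_
  rw [polynomialGaussianDensity, Set.indicator_of_notMem hxS, ENNReal.ofReal_zero]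

theorem integrable_polynomialGaussianMeasure (hS : MeasurableSet S) (hJ : ∀ x ∈ S, 0 ≤ eval x J)
    {c : ℝ} (hbc : 0 < b + c) (Q : MvPolynomial ι ℝ) :
    Integrable (fun x => eval x Q * gaussianWeight c x) (polynomialGaussianMeasure S J b) := by
  rw [polynomialGaussianMeasure, integrable_withDensity_ofReal_iff
    (measurable_polynomialGaussianDensity hS J b) (polynomialGaussianDensity_nonneg hJ b)]
  simp only [polynomialGaussianDensity_mul_gaussianWeight]
  exact integrable_polynomialGaussianDensity hbc hS _

theorem integral_polynomialGaussianMeasure (hS : MeasurableSet S) (hJ : ∀ x ∈ S, 0 ≤ eval x J)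
    {c : ℝ} (hbc : 0 < b + c) (Q : MvPolynomial ι ℝ) :
    ∫ x, eval x Q * gaussianWeight c x ∂(polynomialGaussianMeasure S J b) =
      gaussianIntegral hbc S (J * Q) := by
  rw [polynomialGaussianMeasure, integral_withDensity_ofReal
    (measurable_polynomialGaussianDensity hS J b) (polynomialGaussianDensity_nonneg hJ b)]
  simp only [polynomialGaussianDensity_mul_gaussianWeight]
  exact integral_polynomialGaussianDensity hbc hS _

end PolynomialGaussianDensity

section LawOfSingularValues

/-- A thin singular value decomposition `Y = U * diagonal d * Vᵀ` whose singular values are listed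
in decreasing order. -/
structure IsOrderedSVD {m : Type*} [Fintype m] {p : ℕ} (Y U : Matrix m (Fin p) ℝ) (d : Fin p → ℝ)
    (V : Matrix (Fin p) (Fin p) ℝ) : Prop where
  left_orthonormal : Uᵀ * U = 1
  right_orthonormal : Vᵀ * V = 1
  mem_cone : d ∈ singularValueCone p
  eq_mul : Y = U * diagonal d * Vᵀ

variable {p : ℕ} {Ω : Type*} [MeasurableSpace Ω] {P : Measure Ω}

theorem IsOrderedSVD.eval_evenPowerSums_mul_gaussianWeight {m : Type*} [Fintype m]
    {Y U : Matrix m (Fin p) ℝ} {d : Fin p → ℝ} {V : Matrix (Fin p) (Fin p) ℝ}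
    (h : IsOrderedSVD Y U d V) (f : MvPolynomial ℕ ℝ) (b : ℝ) :
    eval d (evenPowerSums ℝ p f) * gaussianWeight b d =
      eval (fun ij => Y ij.1 ij.2) (tracePowers m (Fin p) ℝ f) *
        gaussianWeight b (fun ij : m × Fin p => Y ij.1 ij.2) := by
  have htrace := trace_gram_pow_eq_of_svd h.left_orthonormal h.right_orthonormal h.eq_mul
  have hweight := htrace 1
  simp only [pow_one, mul_one] at hweight
  rw [eval_evenPowerSums, eval_tracePowers, gaussianWeight_uncurry, hweight, gaussianWeight]
  simp only [htrace]

theorem hasLaw_uncurry {ι κ : Type*} [Fintype ι] [Fintype κ] {μ : ι → κ → Measure ℝ}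
    [∀ i j, IsProbabilityMeasure (μ i j)] {Y : Ω → ι → κ → ℝ}
    (hY : HasLaw Y (Measure.pi fun i => Measure.pi (μ i)) P) :
    HasLaw (fun ω (ij : ι × κ) => Y ω ij.1 ij.2) (Measure.pi fun ij : ι × κ => μ ij.1 ij.2) P := by
  have h := Measure.infinitePi_map_curry_symm μ
  simp only [Measure.infinitePi_eq_pi] at h
  have hcurry : HasLaw (MeasurableEquiv.curry ι κ ℝ).symm
      (Measure.pi fun ij : ι × κ => μ ij.1 ij.2) (Measure.pi fun i => Measure.pi (μ i)) :=
    ⟨by fun_prop, h⟩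
  exact hcurry.comp hY

theorem pi_gaussianReal_zero_eq_polynomialGaussianMeasure (ι : Type*) [Fintype ι] {v : NNReal}
    (hv : v ≠ 0) : Measure.pi (fun _ : ι => gaussianReal 0 v) = polynomialGaussianMeasure Set.univ
      (C ((√(2 * Real.pi * v))⁻¹ ^ Fintype.card ι)) (1 / (2 * v)) := by
  rw [pi_gaussianReal_zero_eq_withDensity ι hv, polynomialGaussianMeasure]
  simp only [polynomialGaussianDensity, Set.indicator_univ, eval_C]

theorem continuous_eval_mul_gaussianWeight {ι : Type*} [Fintype ι] (Q : MvPolynomial ι ℝ)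
    (b : ℝ) : Continuous fun x => eval x Q * gaussianWeight b x :=
  (MvPolynomial.continuous_eval Q).mul (continuous_gaussianWeight b)

theorem integral_evenPowerSums_mul_gaussianWeight_singularValues {m : Type*} [Fintype m]
    {Y U : Ω → Matrix m (Fin p) ℝ} {d : Ω → Fin p → ℝ} {V : Ω → Matrix (Fin p) (Fin p) ℝ}
    {a b c : ℝ} (ha : 0 ≤ a) (hbc : 0 < b + c)
    (hY : HasLaw (fun ω (ij : m × Fin p) => Y ω ij.1 ij.2)
      (polynomialGaussianMeasure Set.univ (C a) b) P)
    (hSVD : ∀ ω, IsOrderedSVD (Y ω) (U ω) (d ω) (V ω)) (f : MvPolynomial ℕ ℝ) :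
    Integrable (fun ω => eval (d ω) (evenPowerSums ℝ p f) * gaussianWeight c (d ω)) P ∧
      ∫ ω, eval (d ω) (evenPowerSums ℝ p f) * gaussianWeight c (d ω) ∂P =
        a * gaussianIntegral hbc Set.univ (tracePowers m (Fin p) ℝ f) := by
  have ha' : ∀ x ∈ (Set.univ : Set (m × Fin p → ℝ)), 0 ≤ eval x (C a) := fun x _ => by simpa
  have hcont := (continuous_eval_mul_gaussianWeight (tracePowers m (Fin p) ℝ f)
    c).aestronglyMeasurable (μ := polynomialGaussianMeasure Set.univ (C a) b)
  simp only [(hSVD _).eval_evenPowerSums_mul_gaussianWeight]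
  constructor
  · have h := integrable_polynomialGaussianMeasure .univ ha' hbc (tracePowers m (Fin p) ℝ f)
    rw [← hY.map_eq] at hcont h
    exact (integrable_map_measure hcont hY.aemeasurable).mp h
  · refine (hY.integral_comp hcont).trans ?_
    rw [integral_polynomialGaussianMeasure .univ ha' hbc, ← smul_eq_C_mul, map_smul, smul_eq_mul]

theorem exists_hasLaw_singularValues {M : ℕ} (hM : M ≠ 0) {v : NNReal} (hv : v ≠ 0)
    {Y U : Ω → Matrix (Fin (M + p)) (Fin p) ℝ} {d : Ω → Fin p → ℝ}
    {V : Ω → Matrix (Fin p) (Fin p) ℝ}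
    (hY : HasLaw (fun ω (ij : Fin (M + p) × Fin p) => Y ω ij.1 ij.2)
      (Measure.pi fun _ => gaussianReal 0 v) P)
    (hd : AEMeasurable d P) (hSVD : ∀ ω, IsOrderedSVD (Y ω) (U ω) (d ω) (V ω)) :
    ∃ c > 0, HasLaw d
      (polynomialGaussianMeasure (singularValueCone p) (C c * svdJacobian ℝ M p) (1 / (2 * v)))
      P := by
  obtain ⟨κ, hκ, hloop⟩ := exists_gaussianIntegral_tracePowers_eq hM p
  have := hY.isFiniteMeasure
  rw [pi_gaussianReal_zero_eq_polynomialGaussianMeasure _ hv] at hY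
  set a : ℝ := (√(2 * Real.pi * v))⁻¹ ^ Fintype.card (Fin (M + p) × Fin p)
  set b : ℝ := 1 / (2 * v)
  have ha : 0 < a := by positivity
  have hb : 0 < b := by positivity
  have hbn (n : ℕ) : 0 < b + n := by positivity
  have hcone := (isClosed_singularValueCone p).measurableSet
  have hjacobian : ∀ x ∈ singularValueCone p, 0 ≤ eval x (C (a * κ) * svdJacobian ℝ M p) :=
    fun x hx => by simpa using mul_nonneg (mul_pos ha hκ).le (eval_svdJacobian_nonneg M hx)
  have hcont (n : ℕ) f :=
    (continuous_eval_mul_gaussianWeight (evenPowerSums ℝ p f) n).aestronglyMeasurable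
      (μ := P.map d)
  have hlaw (n : ℕ) f := integral_evenPowerSums_mul_gaussianWeight_singularValues ha.le
    (hbn n) hY hSVD f
  have := isFiniteMeasure_polynomialGaussianMeasure hb hcone (C (a * κ) * svdJacobian ℝ M p)
  refine ⟨a * κ, mul_pos ha hκ, hd, measure_eq_of_integral_evenPowerSums_mul_gaussianWeight_eq
    ((ae_map_iff hd hcone).mpr (.of_forall fun ω => (hSVD ω).mem_cone))
    (ae_mem_polynomialGaussianMeasure hcone _ _)
    (fun n f => (integrable_map_measure (hcont n f) hd).mpr (hlaw n f).1)
    (fun n f => integrable_polynomialGaussianMeasure hcone hjacobian (hbn n) _) fun n f => ?_⟩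
  rw [integral_map hd (hcont n f), (hlaw n f).2, hloop _ (hbn n),
    integral_polynomialGaussianMeasure hcone hjacobian (hbn n), mul_assoc (C _), ← smul_eq_C_mul,
    map_smul, smul_eq_mul, mul_assoc]

end LawOfSingularValues

section LeastSingularPair

variable {m n : Type*} [Fintype m] [Fintype n]

/-- Unit singular vectors `u`, `v` of `Y` belonging to its least singular value `u ⬝ᵥ Y *ᵥ v`
(up to sign). All conditions are polynomial, hence closed in `(Y, u, v)`. -/
structure IsLeastSingularPair (Y : Matrix m n ℝ) (u : m → ℝ) (v : n → ℝ) : Prop where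
  left_unit : u ⬝ᵥ u = 1
  right_unit : v ⬝ᵥ v = 1
  mulVec_eq : Y *ᵥ v = (u ⬝ᵥ Y *ᵥ v) • u
  sq_le : ∀ x, (u ⬝ᵥ Y *ᵥ v) ^ 2 * (x ⬝ᵥ x) ≤ (Y *ᵥ x) ⬝ᵥ (Y *ᵥ x)

theorem isCompact_setOf_dotProduct_self_eq_one (n : Type*) [Fintype n] :
    IsCompact {u : n → ℝ | u ⬝ᵥ u = 1} := by
  refine (isCompact_univ_pi fun _ => isCompact_Icc (a := (-1 : ℝ)) (b := 1)).of_isClosed_subset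
    (isClosed_eq (by fun_prop) continuous_const) fun u hu i _ => abs_le.mp ?_
  rw [← sq_le_one_iff_abs_le_one, ← (hu : u ⬝ᵥ u = 1), sq]
  exact Finset.single_le_sum (f := fun i => u i * u i) (fun i _ => mul_self_nonneg _)
    (Finset.mem_univ i)

theorem isClosed_setOf_isLeastSingularPair_dotProduct_eq_zero (B : Matrix m n ℝ) :
    IsClosed {Y : Matrix m n ℝ | ∃ u v, IsLeastSingularPair Y u v ∧ u ⬝ᵥ B *ᵥ v = 0} := by
  have := isCompact_iff_compactSpace.mp (isCompact_setOf_dotProduct_self_eq_one m)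
  have := isCompact_iff_compactSpace.mp (isCompact_setOf_dotProduct_self_eq_one n)
  have hclosed : IsClosed {z : ({u : m → ℝ | u ⬝ᵥ u = 1} × {v : n → ℝ | v ⬝ᵥ v = 1}) ×
      Matrix m n ℝ | z.2 *ᵥ z.1.2.1 = (z.1.1.1 ⬝ᵥ z.2 *ᵥ z.1.2.1) • z.1.1.1 ∧
        (∀ x, (z.1.1.1 ⬝ᵥ z.2 *ᵥ z.1.2.1) ^ 2 * (x ⬝ᵥ x) ≤ (z.2 *ᵥ x) ⬝ᵥ (z.2 *ᵥ x)) ∧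
        z.1.1.1 ⬝ᵥ B *ᵥ z.1.2.1 = 0} := by
    simp only [Set.ofPred_and, Set.ofPred_forall]
    exact (isClosed_eq (by fun_prop) (by fun_prop)).inter
      ((isClosed_iInter fun x => isClosed_le (by fun_prop) (by fun_prop)).inter
        (isClosed_eq (by fun_prop) (by fun_prop)))
  convert isClosedMap_snd_of_compactSpace _ hclosed
  ext Y
  constructor
  · rintro ⟨u, v, h, hB⟩
    exact ⟨⟨⟨⟨u, h.left_unit⟩, ⟨v, h.right_unit⟩⟩, Y⟩, ⟨h.mulVec_eq, h.sq_le, hB⟩, rfl⟩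
  · rintro ⟨⟨⟨u, v⟩, Y⟩, ⟨hYv, hle, hB⟩, rfl⟩
    exact ⟨u, v, ⟨u.2, v.2, hYv, hle⟩, hB⟩

theorem dotProduct_mulVec_self_of_transpose_mul_self {Y : Matrix m n ℝ} [DecidableEq n] {c : n → ℝ}
    (hY : Yᵀ * Y = diagonal c) (x : n → ℝ) :
    (Y *ᵥ x) ⬝ᵥ (Y *ᵥ x) = ∑ j, c j * x j ^ 2 := by
  rw [dotProduct_mulVec, vecMul_mulVec, hY, dotProduct_comm]
  simp only [dotProduct, vecMul_diagonal]
  exact Finset.sum_congr rfl fun j _ => by ring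

theorem exists_transpose_mul_self_eq_diagonal [DecidableEq m] [DecidableEq n]
    (h : Fintype.card n ≤ Fintype.card m) (a : m) (b : n) :
    ∃ Y : Matrix m n ℝ, Yᵀ * Y = diagonal (fun j => if j = b then 1 else 4) ∧
      Y.col b = Pi.single a 1 := by
  obtain ⟨e₀⟩ := Function.Embedding.nonempty_of_card_le h
  set e := e₀.setValue b a
  refine ⟨of fun i j => if i = e j then (if j = b then 1 else 2) else 0, ?_, ?_⟩
  · ext i j
    simp only [mul_apply, transpose_apply, of_apply, ite_mul, zero_mul, Finset.sum_ite_eq',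
      Finset.mem_univ, if_true, e.injective.eq_iff, diagonal_apply]
    split_ifs <;> grind
  · ext i
    simp [e, Pi.single_apply]

theorem eq_zero_of_sum_mul_sq_le_sum_sq {c x : n → ℝ} {b : n} (hb : 1 ≤ c b)
    (hc : ∀ j ≠ b, 1 < c j) (h : ∑ j, c j * x j ^ 2 ≤ ∑ j, x j ^ 2) {j : n} (hj : j ≠ b) :
    x j = 0 := by
  have hnonneg (i : n) : 0 ≤ (c i - 1) * x i ^ 2 := by
    refine mul_nonneg (sub_nonneg.mpr ?_) (sq_nonneg _)
    obtain rfl | hi := eq_or_ne i b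
    exacts [hb, (hc i hi).le]
  have hle : ∑ i, (c i - 1) * x i ^ 2 ≤ 0 := by
    simpa only [sub_mul, one_mul, Finset.sum_sub_distrib, sub_nonpos] using h
  have hzero := (Finset.sum_eq_zero_iff_of_nonneg fun i _ => hnonneg i).mp
    (hle.antisymm (Finset.sum_nonneg fun i _ => hnonneg i)) j (Finset.mem_univ j)
  simpa [(sub_pos.mpr (hc j hj)).ne'] using hzero

theorem exists_forall_isLeastSingularPair_imp_eq_zero (h : Fintype.card n ≤ Fintype.card m)
    (B : Matrix m n ℝ) (a : m) (b : n) : ∃ Y : Matrix m n ℝ,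
      ∀ u v, IsLeastSingularPair Y u v → u ⬝ᵥ B *ᵥ v = 0 → B a b = 0 := by
  classical
  obtain ⟨Y, hgram, hcol⟩ := exists_transpose_mul_self_eq_diagonal h a b
  refine ⟨Y, fun u v huv hB => ?_⟩
  have hnorm := dotProduct_mulVec_self_of_transpose_mul_self hgram
  set s := u ⬝ᵥ Y *ᵥ v
  have hs : s ^ 2 ≤ 1 := by
    have := huv.sq_le (Pi.single b 1)
    rw [hnorm] at this
    simpa [Pi.single_apply] using this
  have hsum : ∑ j, (if j = b then (1 : ℝ) else 4) * v j ^ 2 = s ^ 2 := by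
    rw [← hnorm, huv.mulVec_eq]
    simp [huv.left_unit, sq, s]
  have hv1 : ∑ j, v j ^ 2 = 1 := by simpa [dotProduct, sq] using huv.right_unit
  have hzero (j : n) (hj : j ≠ b) : v j = 0 :=
    eq_zero_of_sum_mul_sq_le_sum_sq (c := fun j => if j = b then 1 else 4) (by simp)
      (fun j hj => by simp [hj]) (by linarith) hj
  have hv : v = v b • Pi.single b 1 := by
    ext j
    by_cases hj : j = b
    · simp [hj]
    · simp [hj, hzero j hj]
  have hsu : s • u = v b • Pi.single a 1 := by
    rw [← huv.mulVec_eq, hv, mulVec_smul, mulVec_single_one, hcol]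
    simp
  have hvb : v b ^ 2 = 1 := by
    rw [← hv1, Finset.sum_eq_single b (fun j _ hj => by simp [hzero j hj]) (by simp)]
  calc B a b = v b ^ 2 * B a b := by rw [hvb, one_mul]
    _ = (s • u) ⬝ᵥ B *ᵥ v := by
      rw [hsu, hv]
      simp [mulVec_smul, sq, mul_assoc]
    _ = 0 := by rw [smul_dotProduct, hB, smul_zero]

end LeastSingularPair

section NullHypothesis

theorem mul_diagonal_mul_transpose_mulVec_col {m n l : Type*} [Fintype n] [Fintype l]
    [DecidableEq l] {V : Matrix n l ℝ} (hV : Vᵀ * V = 1) (U : Matrix m l ℝ)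
    (c : l → ℝ) (i : l) : (U * diagonal c * Vᵀ) *ᵥ V.col i = c i • U.col i := by
  rw [← mulVec_single_one V, mulVec_mulVec, Matrix.mul_assoc, hV, Matrix.mul_one,
    mulVec_single_one]
  ext j
  simp [mul_diagonal, mul_comm]

variable {m : Type*} [Fintype m] {p : ℕ} {Y U : Matrix m (Fin p) ℝ} {d : Fin p → ℝ}
  {V : Matrix (Fin p) (Fin p) ℝ}

theorem col_dotProduct_col_self {m n : Type*} [Fintype m] [DecidableEq n] {U : Matrix m n ℝ}
    (hU : Uᵀ * U = 1) (i : n) : U.col i ⬝ᵥ U.col i = 1 := by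
  simpa [mul_apply, dotProduct] using congr($hU i i)

theorem IsOrderedSVD.isLeastSingularPair (h : IsOrderedSVD Y U d V) {l : Fin p}
    (hl : ∀ i, i ≤ l) : IsLeastSingularPair Y (U.col l) (V.col l) := by
  have hU := col_dotProduct_col_self h.left_orthonormal l
  have hYv : Y *ᵥ V.col l = d l • U.col l := by
    rw [h.eq_mul, mul_diagonal_mul_transpose_mulVec_col h.right_orthonormal]
  have hd : U.col l ⬝ᵥ Y *ᵥ V.col l = d l := by
    rw [hYv, dotProduct_smul, hU, smul_eq_mul, mul_one]
  refine ⟨hU, col_dotProduct_col_self h.right_orthonormal l, by rw [hd, hYv], fun x => ?_⟩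
  obtain ⟨w, rfl⟩ : ∃ w, V *ᵥ w = x :=
    ⟨Vᵀ *ᵥ x, by rw [mulVec_mulVec, mul_eq_one_comm.mp h.right_orthonormal, one_mulVec]⟩
  have hYV : (Y * V)ᵀ * (Y * V) = diagonal fun j => d j ^ 2 := by
    have hYV' : Y * V = U * diagonal d := by
      rw [h.eq_mul, Matrix.mul_assoc, h.right_orthonormal, Matrix.mul_one]
    rw [hYV', transpose_mul, Matrix.mul_assoc, ← Matrix.mul_assoc Uᵀ, h.left_orthonormal,
      Matrix.one_mul, diagonal_transpose, diagonal_mul_diagonal]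
    simp only [sq]
  rw [hd, mulVec_mulVec, dotProduct_mulVec_self_of_transpose_mul_self hYV,
    dotProduct_mulVec_self_of_transpose_mul_self (h.right_orthonormal.trans diagonal_one.symm),
    Finset.mul_sum]
  refine Finset.sum_le_sum fun j _ => ?_
  nlinarith [pow_le_pow_left₀ (h.mem_cone.2 l) (h.mem_cone.1 (hl j)) 2, sq_nonneg (w j)]

theorem dotProduct_mulVec_col_eq_zero_of_projection {B : Matrix m (Fin p) ℝ}
    (hU : Uᵀ * U = 1) (hV : Vᵀ * V = 1) {c : Fin p → ℝ} {l : Fin p} (hl : c l = 1)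
    (h : U * diagonal c * Uᵀ * B * (V * diagonal c * Vᵀ) = 0) :
    U.col l ⬝ᵥ B *ᵥ V.col l = 0 := by
  have hPu : U.col l ᵥ* (U * diagonal c * Uᵀ) = U.col l := by
    rw [← mulVec_transpose, transpose_mul, transpose_mul, transpose_transpose,
      diagonal_transpose, ← Matrix.mul_assoc, mul_diagonal_mul_transpose_mulVec_col hU, hl,
      one_smul]
  have hPv : (V * diagonal c * Vᵀ) *ᵥ V.col l = V.col l := by
    rw [mul_diagonal_mul_transpose_mulVec_col hV, hl, one_smul]
  have := congr(U.col l ⬝ᵥ $h *ᵥ V.col l)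
  rwa [← mulVec_mulVec, hPv, ← mulVec_mulVec, dotProduct_mulVec, hPu, zero_mulVec,
    dotProduct_zero] at this

theorem isOpenPosMeasure_pi_pi_gaussianReal {m n : Type*} [Fintype m] [Fintype n]
    (B : m → n → ℝ) {v : NNReal} (hv : v ≠ 0) :
    (Measure.pi fun i => Measure.pi fun j => gaussianReal (B i j) v).IsOpenPosMeasure := by
  have (i : m) (j : n) : (gaussianReal (B i j) v).IsOpenPosMeasure :=
    (gaussianReal_absolutelyContinuous' (B i j) hv).isOpenPosMeasure
  infer_instance

theorem mean_eq_zero_of_trailing_projection_eq_zero {Ω : Type*} [MeasurableSpace Ω] {P : Measure Ω}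
    (hp : p ≤ Fintype.card m) {B : Matrix m (Fin p) ℝ} {v : NNReal} (hv : v ≠ 0)
    {Y U : Ω → m → Fin p → ℝ} {d : Ω → Fin p → ℝ} {V : Ω → Fin p → Fin p → ℝ}
    (hY : HasLaw Y (Measure.pi fun i => Measure.pi fun j => gaussianReal (B i j) v) P)
    (hSVD : ∀ ω, IsOrderedSVD (of (Y ω)) (of (U ω)) (d ω) (of (V ω))) {k : ℕ} (hk : k < p)
    (hnull : ∀ᵐ ω ∂P,
      (of (U ω) * diagonal (fun j : Fin p => if k ≤ (j : ℕ) then (1 : ℝ) else 0) * (of (U ω))ᵀ) *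
        B * (of (V ω) * diagonal (fun j : Fin p => if k ≤ (j : ℕ) then (1 : ℝ) else 0) *
          (of (V ω))ᵀ) = 0) : B = 0 := by
  ext a b
  obtain ⟨Y₀, hY₀⟩ := exists_forall_isLeastSingularPair_imp_eq_zero (by simpa using hp) B a b
  have hclosed : IsClosed
      {Z : m → Fin p → ℝ | ∃ u w, IsLeastSingularPair (of Z) u w ∧ u ⬝ᵥ B *ᵥ w = 0} :=
    isClosed_setOf_isLeastSingularPair_dotProduct_eq_zero B
  have hae : ∀ᵐ Z ∂(Measure.pi fun i => Measure.pi fun j => gaussianReal (B i j) v),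
      ∃ u w, IsLeastSingularPair (of Z) u w ∧ u ⬝ᵥ B *ᵥ w = 0 := by
    rw [← hY.map_eq]
    refine (ae_map_iff hY.aemeasurable hclosed.measurableSet).mpr ?_
    filter_upwards [hnull] with ω hω
    let l : Fin p := ⟨p - 1, by omega⟩
    exact ⟨_, _, (hSVD ω).isLeastSingularPair (l := l) fun i => Nat.le_sub_one_of_lt i.2,
      dotProduct_mulVec_col_eq_zero_of_projection (hSVD ω).left_orthonormal
        (hSVD ω).right_orthonormal (if_pos (Nat.le_sub_one_of_lt hk)) hω⟩
  have := isOpenPosMeasure_pi_pi_gaussianReal B hv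
  obtain ⟨u, w, hpair, hB⟩ := (hclosed.ae_eq_univ_iff_eq.mp (eventuallyEq_univ.mpr hae)).ge
    (Set.mem_univ Y₀)
  exact hY₀ u w hpair hB

end NullHypothesis

section ProbabilityIntegralTransform

theorem continuous_cdf (μ : Measure ℝ) [IsProbabilityMeasure μ] [NullSingletonClass μ] :
    Continuous (cdf μ) := by
  refine continuous_iff_continuousAt.mpr fun x =>
    continuousAt_iff_continuous_left'_right'.mpr ⟨?_, ((cdf μ).right_continuous x).mono
      Set.Ioi_subset_Ici_self⟩
  have hx := (cdf μ).measure_singleton x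
  rw [measure_cdf, measure_singleton, eq_comm, ENNReal.ofReal_eq_zero, sub_nonpos] at hx
  exact (monotone_cdf μ).continuousWithinAt_Iio_iff_leftLim_eq.mpr
    (((monotone_cdf μ).leftLim_le le_rfl).antisymm hx)

theorem exists_cdf_eq (μ : Measure ℝ) [IsProbabilityMeasure μ] [NullSingletonClass μ] {u : ℝ}
    (h0 : 0 < u) (h1 : u < 1) : ∃ x, cdf μ x = u := by
  obtain ⟨x, hx⟩ := ((tendsto_cdf_atBot μ).eventually_lt_const h0).exists
  obtain ⟨y, hy⟩ := ((tendsto_cdf_atTop μ).eventually_const_lt h1).exists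
  exact mem_range_of_exists_le_of_exists_ge (continuous_cdf μ) ⟨x, hx.le⟩ ⟨y, hy.le⟩

theorem measureReal_cdf_le (μ : Measure ℝ) [IsProbabilityMeasure μ] [NullSingletonClass μ] (u : ℝ) :
    μ.real {x | cdf μ x ≤ u} = max 0 (min u 1) := by
  refine le_antisymm ?_ (max_le measureReal_nonneg ?_)
  · refine le_of_forall_gt_imp_ge_of_dense fun a ha => ?_
    obtain ⟨h0, hua⟩ := max_lt_iff.mp ha
    rcases lt_or_ge a 1 with h1 | h1
    · obtain ⟨x, rfl⟩ := exists_cdf_eq μ h0 h1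
      rw [cdf_eq_real]
      exact measureReal_mono fun y hy => le_of_lt <| (monotone_cdf μ).reflect_lt <|
        hy.trans_lt <| (min_lt_iff.mp hua).resolve_right h1.not_gt
    · exact measureReal_le_one.trans h1
  · rcases le_or_gt u 0 with h0 | h0
    · exact (min_le_left u 1).trans (h0.trans measureReal_nonneg)
    rcases lt_or_ge u 1 with h1 | h1
    · obtain ⟨x, rfl⟩ := exists_cdf_eq μ h0 h1
      exact (min_le_left _ _).trans <| (cdf_eq_real μ x).le.trans <|
        measureReal_mono fun y hy => monotone_cdf μ hy
    · have huniv : {x | cdf μ x ≤ u} = Set.univ :=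
        Set.eq_univ_of_forall fun x => (cdf_le_one μ x).trans h1
      rw [min_eq_right h1, huniv, probReal_univ]

theorem map_cdf (μ : Measure ℝ) [IsProbabilityMeasure μ] [NullSingletonClass μ] :
    μ.map (cdf μ) = volume.restrict (Set.Ioo 0 1) := by
  refine Measure.ext_of_Iic _ _ fun u => ?_
  rw [Measure.map_apply (continuous_cdf μ).measurable measurableSet_Iic,
    restrict_Ioo_eq_restrict_Ioc, Measure.restrict_apply measurableSet_Iic, Set.inter_comm,
    Set.Ioc_inter_Iic, Real.volume_Ioc, sub_zero, min_comm, ← ofReal_measureReal]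
  exact (congrArg ENNReal.ofReal (measureReal_cdf_le μ u)).trans (by simp [ENNReal.ofReal_max])

theorem map_measureReal_Ioi (μ : Measure ℝ) [IsProbabilityMeasure μ] [NullSingletonClass μ] :
    μ.map (fun t => μ.real (Set.Ioi t)) = volume.restrict (Set.Ioo 0 1) := by
  have hreflect : MeasurePreserving (fun u : ℝ => 1 - u) (volume.restrict (Set.Ioo 0 1))
      (volume.restrict (Set.Ioo 0 1)) := by
    have h := (volume.measurePreserving_sub_left (1 : ℝ)).restrict_preimage
      (measurableSet_Ioo (a := (0 : ℝ)) (b := 1))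
    simpa using h
  have hsurvival (t : ℝ) : μ.real (Set.Ioi t) = 1 - cdf μ t := by
    rw [cdf_eq_real, ← probReal_compl_eq_one_sub measurableSet_Iic, Set.compl_Iic]
  simp only [hsurvival]
  rw [← Function.comp_def (fun u => 1 - u) (cdf μ),
    ← Measure.map_map (by fun_prop) (continuous_cdf μ).measurable, map_cdf, hreflect.map_eq]

theorem map_measureReal_Ioi_div_univ (μ : Measure ℝ) [IsFiniteMeasure μ] [NullSingletonClass μ] :
    μ.map (fun t => μ.real (Set.Ioi t) / μ.real Set.univ) =
      μ Set.univ • volume.restrict (Set.Ioo 0 1) := by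
  rcases eq_or_ne μ 0 with rfl | hμ
  · simp
  have := NeZero.mk hμ
  set ν := (μ Set.univ)⁻¹ • μ
  have hν : ν ≪ μ := Measure.smul_absolutelyContinuous
  have : NullSingletonClass ν := ⟨fun x => hν (measure_singleton x)⟩
  have hμν : μ = μ Set.univ • ν := by
    rw [smul_smul, ENNReal.mul_inv_cancel (by simpa using hμ) (measure_ne_top μ _), one_smul]
  have hreal (t : ℝ) : μ.real (Set.Ioi t) / μ.real Set.univ = ν.real (Set.Ioi t) := by
    simp [ν, Measure.real, div_eq_inv_mul]
  simp only [hreal]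
  conv_lhs => rw [hμν]
  rw [Measure.map_smul, map_measureReal_Ioi]

theorem map_setIntegral_Ioi_div_integral {f : ℝ → ℝ} (hf : Integrable f) (hf0 : ∀ y, 0 ≤ f y) :
    (volume.withDensity fun y => ENNReal.ofReal (f y)).map
        (fun t => (∫ y in Set.Ioi t, f y) / ∫ y, f y) =
      ENNReal.ofReal (∫ y, f y) • volume.restrict (Set.Ioo 0 1) := by
  set μ := volume.withDensity fun y => ENNReal.ofReal (f y)
  have : IsFiniteMeasure μ := isFiniteMeasure_withDensity_ofReal hf.2
  have : NullSingletonClass μ := nullSingletonClass_withDensity _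
  have happly {s : Set ℝ} (hs : MeasurableSet s) : μ s = ENNReal.ofReal (∫ y in s, f y) := by
    rw [withDensity_apply _ hs, ofReal_integral_eq_lintegral_ofReal hf.restrict (.of_forall hf0)]
  have hreal {s : Set ℝ} (hs : MeasurableSet s) : μ.real s = ∫ y in s, f y := by
    rw [Measure.real, happly hs, ENNReal.toReal_ofReal (integral_nonneg hf0)]
  have h := map_measureReal_Ioi_div_univ μ
  simpa only [hreal measurableSet_Ioi, hreal MeasurableSet.univ, happly MeasurableSet.univ,
    setIntegral_univ] using h

theorem prod_withDensity_apply {α β : Type*} [MeasurableSpace α] [MeasurableSpace β]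
    (ρ : Measure α) [SFinite ρ] (ν : Measure β) [SFinite ν] {f : α × β → ENNReal}
    (hf : Measurable f) {S : Set (α × β)} (hS : MeasurableSet S) :
    (ρ.prod ν).withDensity f S =
      ∫⁻ a, ν.withDensity (fun y => f (a, y)) (Prod.mk a ⁻¹' S) ∂ρ := by
  rw [withDensity_apply _ hS, ← lintegral_indicator hS,
    lintegral_prod _ (hf.indicator hS).aemeasurable]
  refine lintegral_congr fun a => ?_
  rw [withDensity_apply _ (measurable_prodMk_left hS),
    ← lintegral_indicator (measurable_prodMk_left hS)]
  rfl

theorem measurable_setIntegral_Ioi {α : Type*} [MeasurableSpace α] {f : α × ℝ → ℝ}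
    (hf : Measurable f) : Measurable fun z : α × ℝ => ∫ y in Set.Ioi z.2, f (z.1, y) := by
  have hS : MeasurableSet {z : (α × ℝ) × ℝ | z.1.2 < z.2} :=
    measurableSet_lt (by fun_prop) (by fun_prop)
  have h : Measurable fun z : (α × ℝ) × ℝ => f (z.1.1, z.2) := hf.comp (by fun_prop)
  simp only [← integral_indicator measurableSet_Ioi]
  exact (h.indicator hS).stronglyMeasurable.integral_prod_right'.measurable

theorem hasLaw_setIntegral_Ioi_div_integral {α : Type*} [MeasurableSpace α] (ρ : Measure α)
    [SFinite ρ] {f : α × ℝ → ℝ} (hf : Measurable f) (hf0 : ∀ z, 0 ≤ f z)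
    (hfi : ∀ a, Integrable fun y => f (a, y))
    [IsProbabilityMeasure ((ρ.prod volume).withDensity fun z => ENNReal.ofReal (f z))] :
    HasLaw (fun z => (∫ y in Set.Ioi z.2, f (z.1, y)) / ∫ y, f (z.1, y))
      (volume.restrict (Set.Ioo 0 1))
      ((ρ.prod volume).withDensity fun z => ENNReal.ofReal (f z)) := by
  have hmass : Measurable fun a => ∫ y, f (a, y) :=
    hf.stronglyMeasurable.integral_prod_right'.measurable
  have hratio : Measurable fun z : α × ℝ => (∫ y in Set.Ioi z.2, f (z.1, y)) / ∫ y, f (z.1, y) :=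
    (measurable_setIntegral_Ioi hf).div (hmass.comp measurable_fst)
  set μ := (ρ.prod volume).withDensity fun z => ENNReal.ofReal (f z)
  set c := ∫⁻ a, ENNReal.ofReal (∫ y, f (a, y)) ∂ρ
  have hmap : μ.map (fun z => (∫ y in Set.Ioi z.2, f (z.1, y)) / ∫ y, f (z.1, y)) =
      c • volume.restrict (Set.Ioo 0 1) := by
    ext A hA
    rw [Measure.map_apply hratio hA, prod_withDensity_apply ρ volume hf.ennreal_ofReal (hratio hA),
      Measure.smul_apply, smul_eq_mul, ← lintegral_mul_const _ hmass.ennreal_ofReal]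
    refine lintegral_congr fun a => ?_
    have hratio_a : Measurable fun t => (∫ y in Set.Ioi t, f (a, y)) / ∫ y, f (a, y) :=
      hratio.comp measurable_prodMk_left
    have h := congr($(map_setIntegral_Ioi_div_integral (hfi a) fun y => hf0 (a, y)) A)
    rwa [Measure.map_apply hratio_a hA] at h
  have := Measure.isProbabilityMeasure_map (μ := μ) hratio.aemeasurable
  have hc : c = 1 := by
    have h := congr($hmap Set.univ)
    rw [measure_univ] at h
    simpa using h.symm
  exact ⟨hratio.aemeasurable, by rw [hmap, hc, one_smul]⟩

end ProbabilityIntegralTransform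

section TrailingDensity

theorem prod_prod_Ioi_add {R : Type*} [CommMonoid R] {k n : ℕ}
    (F : Fin (k + n) → Fin (k + n) → R) :
    ∏ i, ∏ j ∈ Finset.Ioi i, F i j =
      (∏ i : Fin k, ∏ j ∈ Finset.Ioi i, F (i.castAdd n) (j.castAdd n)) *
        (∏ i : Fin k, ∏ j : Fin n, F (i.castAdd n) (j.natAdd k)) *
        ∏ i : Fin n, ∏ j ∈ Finset.Ioi i, F (i.natAdd k) (j.natAdd k) := by
  have hIoi {m : ℕ} (i : Fin m) (f : Fin m → R) :
      ∏ j ∈ Finset.Ioi i, f j = ∏ j, if i < j then f j else 1 := by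
    rw [← Finset.prod_filter, Finset.filter_lt_eq_Ioi]
  have hcross (i : Fin k) (j : Fin n) : i.castAdd n < j.natAdd k := by
    rw [Fin.lt_def, Fin.val_castAdd, Fin.val_natAdd]
    lia
  have hleft (i j : Fin k) : i.castAdd n < j.castAdd n ↔ i < j := Iff.rfl
  simp only [hIoi, Fin.prod_univ_add, hcross, (hcross _ _).le.not_gt, hleft,
    Fin.natAdd_lt_natAdd_iff, if_true, if_false, Finset.prod_const_one, mul_one,
    Finset.prod_mul_distrib, mul_assoc]

/-- The factor of the joint density of the singular values which couples the leading ones `a` to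
the `n` trailing ones, as a polynomial in the latter. -/
noncomputable def interactionPolynomial {k : ℕ} (n : ℕ) (a : Fin k → ℝ) :
    MvPolynomial (Fin n) ℝ :=
  ∏ i, ∏ j, (C (a i ^ 2) - X j ^ 2)

theorem eval_interactionPolynomial {k n : ℕ} (a : Fin k → ℝ) (v : Fin n → ℝ) :
    eval v (interactionPolynomial n a) = ∏ i, ∏ j, (a i ^ 2 - v j ^ 2) := by
  simp [interactionPolynomial]

theorem eval_append_svdJacobian (M : ℕ) {k n : ℕ} (a : Fin k → ℝ) (v : Fin n → ℝ) :
    eval (Fin.append a v) (svdJacobian ℝ M (k + n)) =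
      eval a (svdJacobian ℝ M k) * eval v (svdJacobian ℝ M n * interactionPolynomial n a) := by
  rw [eval_svdJacobian,
    prod_prod_Ioi_add fun i j => Fin.append a v i ^ 2 - Fin.append a v j ^ 2]
  simp only [map_mul, eval_svdJacobian, eval_interactionPolynomial, Fin.prod_univ_add,
    Fin.append_left, Fin.append_right]
  ring

theorem gaussianWeight_append (b : ℝ) {k n : ℕ} (a : Fin k → ℝ) (v : Fin n → ℝ) :
    gaussianWeight b (Fin.append a v) = gaussianWeight b a * gaussianWeight b v := by
  simp only [gaussianWeight_eq_prod, Fin.prod_univ_add, Fin.append_left, Fin.append_right]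

/-- The set of admissible trailing singular values, given the leading ones `a`. -/
def trailingCone {k : ℕ} (q : ℕ) (a : Fin k → ℝ) : Set (Fin (q + 1) → ℝ) :=
  {v | Antitone v ∧ 0 ≤ v (Fin.last q) ∧ ∀ i, v 0 ≤ a i}

variable {k q : ℕ}

theorem trailingCone_subset_singularValueCone (a : Fin k → ℝ) :
    trailingCone q a ⊆ singularValueCone (q + 1) :=
  fun _ hv => ⟨hv.1, fun i => hv.2.1.trans (hv.1 i.le_last)⟩

theorem isClosed_mem_trailingCone :
    IsClosed {z : (Fin k → ℝ) × (Fin (q + 1) → ℝ) | z.2 ∈ trailingCone q z.1} := by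
  simp only [trailingCone, Antitone, Set.mem_ofPred_eq]
  simp only [Set.ofPred_and, Set.ofPred_forall]
  exact (isClosed_iInter fun i => isClosed_iInter fun j => isClosed_iInter fun _ =>
    isClosed_le (by fun_prop) (by fun_prop)).inter
    ((isClosed_le (by fun_prop) (by fun_prop)).inter
      (isClosed_iInter fun i => isClosed_le (by fun_prop) (by fun_prop)))

theorem measurableSet_trailingCone (a : Fin k → ℝ) : MeasurableSet (trailingCone q a) :=
  measurable_prodMk_left isClosed_mem_trailingCone.measurableSet

theorem append_mem_singularValueCone_iff {a : Fin k → ℝ} {v : Fin (q + 1) → ℝ} :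
    Fin.append a v ∈ singularValueCone (k + (q + 1)) ↔
      a ∈ singularValueCone k ∧ v ∈ trailingCone q a := by
  have hcross (i : Fin k) (j : Fin (q + 1)) : i.castAdd (q + 1) < j.natAdd k := by
    rw [Fin.lt_def, Fin.val_castAdd, Fin.val_natAdd]
    lia
  constructor
  · rintro ⟨hanti, hnonneg⟩
    refine ⟨⟨fun i j hij => ?_, fun i => ?_⟩, fun i j hij => ?_, ?_, fun i => ?_⟩
    · simpa using hanti (show i.castAdd (q + 1) ≤ j.castAdd (q + 1) from hij)
    · simpa using hnonneg (i.castAdd (q + 1))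
    · simpa using hanti (show i.natAdd k ≤ j.natAdd k by simpa using hij)
    · simpa only [Fin.append_right] using hnonneg ((Fin.last q).natAdd k)
    · simpa only [Fin.append_left, Fin.append_right] using hanti (hcross i 0).le
  · rintro ⟨ha, hv⟩
    have hvnonneg := trailingCone_subset_singularValueCone a hv
    refine ⟨fun i j hij => ?_, fun i => ?_⟩
    · induction i using Fin.addCases with
      | left i =>
        induction j using Fin.addCases with
        | left j => simpa using ha.1 (show i ≤ j from hij)
        | right j => simpa using (hv.1 j.zero_le).trans (hv.2.2 i)
      | right i =>
        induction j using Fin.addCases with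
        | left j => exact absurd hij (hcross j i).not_ge
        | right j => simpa using hv.1 (show i ≤ j by simpa using hij)
    · induction i using Fin.addCases with
      | left i => simpa using ha.2 i
      | right i => simpa using hvnonneg.2 i

/-- The unnormalised conditional density of the trailing singular values, given the leading
ones `a`. -/
noncomputable def trailingDensity (M : ℕ) (b : ℝ) (a : Fin k → ℝ) (v : Fin (q + 1) → ℝ) : ℝ :=
  polynomialGaussianDensity (trailingCone q a)
    (svdJacobian ℝ M (q + 1) * interactionPolynomial (q + 1) a) b v

theorem polynomialGaussianDensity_append (M : ℕ) (b : ℝ) (a : Fin k → ℝ) (v : Fin (q + 1) → ℝ) :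
    polynomialGaussianDensity (singularValueCone (k + (q + 1))) (svdJacobian ℝ M (k + (q + 1))) b
        (Fin.append a v) =
      polynomialGaussianDensity (singularValueCone k) (svdJacobian ℝ M k) b a *
        trailingDensity M b a v := by
  classical
  simp only [trailingDensity, polynomialGaussianDensity, Set.indicator_apply,
    append_mem_singularValueCone_iff]
  by_cases ha : a ∈ singularValueCone k <;> by_cases hv : v ∈ trailingCone q a <;>
    simp only [ha, hv, and_self, and_true, and_false, if_true, if_false, zero_mul, mul_zero]
  rw [eval_append_svdJacobian, gaussianWeight_append]
  ring

theorem trailingDensity_of_notMem (M : ℕ) (b : ℝ) {a : Fin k → ℝ} {v : Fin (q + 1) → ℝ}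
    (hv : v ∉ trailingCone q a) : trailingDensity M b a v = 0 := by
  rw [trailingDensity, polynomialGaussianDensity, Set.indicator_of_notMem hv]

theorem trailingDensity_eq (M : ℕ) (σ : ℝ) (a : Fin k → ℝ) (v : Fin (q + 1) → ℝ) :
    trailingDensity M (1 / (2 * σ ^ 2)) a v =
      (∏ i, Real.exp (-v i ^ 2 / (2 * σ ^ 2)) * v i ^ M) *
        (∏ i, ∏ j ∈ Finset.Ioi i, (v i ^ 2 - v j ^ 2)) * (∏ i, ∏ j, (a i ^ 2 - v j ^ 2)) *
        (trailingCone q a).indicator (fun _ => 1) v := by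
  have hexp (x : ℝ) : Real.exp (-(1 / (2 * σ ^ 2)) * x ^ 2) = Real.exp (-x ^ 2 / (2 * σ ^ 2)) := by
    ring_nf
  by_cases hv : v ∈ trailingCone q a
  · rw [trailingDensity, polynomialGaussianDensity, Set.indicator_of_mem hv,
      Set.indicator_of_mem hv, map_mul, eval_svdJacobian, eval_interactionPolynomial,
      gaussianWeight_eq_prod, Finset.prod_mul_distrib]
    simp only [hexp]
    ring
  · rw [trailingDensity_of_notMem M _ hv, Set.indicator_of_notMem hv, mul_zero]

theorem trailingDensity_nonneg (M : ℕ) (b : ℝ) (a : Fin k → ℝ) (v : Fin (q + 1) → ℝ) :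
    0 ≤ trailingDensity M b a v := by
  refine polynomialGaussianDensity_nonneg (fun v hv => ?_) b v
  have hv' := trailingCone_subset_singularValueCone a hv
  rw [map_mul, eval_interactionPolynomial]
  exact mul_nonneg (eval_svdJacobian_nonneg M hv') <| Finset.prod_nonneg fun i _ =>
    Finset.prod_nonneg fun j _ => sub_nonneg.mpr <|
      pow_le_pow_left₀ (hv'.2 j) ((hv.1 j.zero_le).trans (hv.2.2 i)) 2

theorem integrable_trailingDensity (M : ℕ) {b : ℝ} (hb : 0 < b) (a : Fin k → ℝ) :
    Integrable (trailingDensity (q := q) M b a) :=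
  integrable_polynomialGaussianDensity hb (measurableSet_trailingCone a) _

theorem measurable_trailingDensity (M : ℕ) (b : ℝ) :
    Measurable fun z : (Fin k → ℝ) × (Fin (q + 1) → ℝ) => trailingDensity M b z.1 z.2 := by
  have hcont : Continuous fun z : (Fin k → ℝ) × (Fin (q + 1) → ℝ) =>
      eval z.2 (svdJacobian ℝ M (q + 1) * interactionPolynomial (q + 1) z.1) *
        gaussianWeight b z.2 := by
    simp only [map_mul, eval_svdJacobian, eval_interactionPolynomial, gaussianWeight_eq_prod]
    fun_prop
  exact hcont.measurable.indicator isClosed_mem_trailingCone.measurableSet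

end TrailingDensity

section NextSingularValue

variable {α β : Type*} [MeasurableSpace α] [MeasurableSpace β] {μ : Measure α} {ν : Measure β}

theorem map_withDensity_comp {f : α → β} (hf : MeasurePreserving f μ ν) {F : β → ENNReal}
    (hF : Measurable F) : (μ.withDensity (F ∘ f)).map f = ν.withDensity F := by
  ext A hA
  rw [Measure.map_apply hf.measurable hA, withDensity_apply _ (hf.measurable hA),
    withDensity_apply _ hA]
  exact hf.setLIntegral_comp_preimage hA hF

theorem map_fst_withDensity_ofReal [SFinite μ] [SFinite ν] {f : α × β → ℝ} (hf : Measurable f)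
    (hf0 : ∀ z, 0 ≤ f z) (hfi : Integrable f (μ.prod ν)) :
    ((μ.prod ν).withDensity fun z => ENNReal.ofReal (f z)).map Prod.fst =
      μ.withDensity fun a => ENNReal.ofReal (∫ c, f (a, c) ∂ν) := by
  ext A hA
  rw [Measure.map_apply measurable_fst hA, prod_withDensity_apply μ ν hf.ennreal_ofReal
    (measurable_fst hA), withDensity_apply _ hA, ← lintegral_indicator hA]
  refine lintegral_congr_ae ?_
  filter_upwards [hfi.prod_right_ae] with a ha
  by_cases haA : a ∈ A
  · simp [← Set.preimage_comp, Function.comp_def, haA,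
      ofReal_integral_eq_lintegral_ofReal ha (.of_forall fun c => hf0 (a, c))]
  · simp [← Set.preimage_comp, Function.comp_def, haA]

theorem measurePreserving_append (m n : ℕ) :
    MeasurePreserving fun z : (Fin m → ℝ) × (Fin n → ℝ) => Fin.append z.1 z.2 := by
  have happend : (fun z : (Fin m → ℝ) × (Fin n → ℝ) => Fin.append z.1 z.2) =
      MeasurableEquiv.piCongrLeft (fun _ => ℝ) finSumFinEquiv ∘
        (MeasurableEquiv.sumPiEquivProdPi fun _ : Fin m ⊕ Fin n => ℝ).symm := by
    ext z i
    obtain ⟨j, rfl⟩ := finSumFinEquiv.surjective i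
    rw [Function.comp_apply, MeasurableEquiv.coe_piCongrLeft, Equiv.piCongrLeft_apply_apply]
    rcases j with j | j
    · exact Fin.append_left z.1 z.2 j
    · exact Fin.append_right z.1 z.2 j
  rw [happend]
  exact (volume_measurePreserving_piCongrLeft (fun _ => ℝ) finSumFinEquiv).comp
    (volume_measurePreserving_sumPiEquivProdPi_symm fun _ => ℝ)

theorem measurePreserving_vecCons (n : ℕ) :
    MeasurePreserving fun z : ℝ × (Fin n → ℝ) => vecCons z.1 z.2 := by
  have hcons : (fun z : ℝ × (Fin n → ℝ) => vecCons z.1 z.2) =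
      (MeasurableEquiv.piFinSuccAbove (fun _ : Fin (n + 1) => ℝ) 0).symm := by
    ext z i
    simp [MeasurableEquiv.piFinSuccAbove, vecCons, Fin.insertNthEquiv]
  rw [hcons]
  exact (volume_preserving_piFinSuccAbove (fun _ : Fin (n + 1) => ℝ) 0).symm

theorem measurePreserving_append_vecCons (k q : ℕ) :
    MeasurePreserving fun z : ((Fin k → ℝ) × ℝ) × (Fin q → ℝ) =>
      Fin.append z.1.1 (vecCons z.1.2 z.2) :=
  ((measurePreserving_append k (q + 1)).comp
    ((MeasurePreserving.id volume).prod (measurePreserving_vecCons q))).comp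
    (measurePreserving_prodAssoc _ _ _)

variable {k q : ℕ}

/-- The function `g` of the paper: the unnormalised conditional density at `y` of the `(k + 1)`-st
singular value, given the `k` leading ones `a`, when `q` further singular values follow. -/
noncomputable def nextSingularValueDensity (M : ℕ) (b : ℝ) (q : ℕ) (a : Fin k → ℝ) (y : ℝ) : ℝ :=
  ∫ w : Fin q → ℝ, trailingDensity M b a (vecCons y w)

theorem nextSingularValueDensity_nonneg (M : ℕ) (b : ℝ) (a : Fin k → ℝ) (y : ℝ) :
    0 ≤ nextSingularValueDensity M b q a y :=
  integral_nonneg fun _ => trailingDensity_nonneg M b a _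

theorem measurable_nextSingularValueDensity (M : ℕ) (b : ℝ) :
    Measurable fun z : (Fin k → ℝ) × ℝ => nextSingularValueDensity M b q z.1 z.2 := by
  have hcons : Measurable fun z : ((Fin k → ℝ) × ℝ) × (Fin q → ℝ) =>
      (z.1.1, vecCons z.1.2 z.2) :=
    Measurable.prodMk (by fun_prop) ((measurePreserving_vecCons q).measurable.comp
      (g := fun z : ℝ × (Fin q → ℝ) => vecCons z.1 z.2)
      (f := fun z : ((Fin k → ℝ) × ℝ) × (Fin q → ℝ) => (z.1.2, z.2)) (by fun_prop))
  exact ((measurable_trailingDensity M b).comp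
    hcons).stronglyMeasurable.integral_prod_right'.measurable

theorem integrable_nextSingularValueDensity (M : ℕ) {b : ℝ} (hb : 0 < b) (a : Fin k → ℝ) :
    Integrable (nextSingularValueDensity M b q a) :=
  ((measurePreserving_vecCons q).integrable_comp_of_integrable
    (integrable_trailingDensity M hb a)).integral_prod_left

theorem nextSingularValueDensity_eq_zero (M : ℕ) (b : ℝ) {a : Fin k → ℝ} {y : ℝ}
    (hy : y < 0 ∨ ∃ i, a i < y) : nextSingularValueDensity M b q a y = 0 := by
  refine integral_eq_zero_of_ae (.of_forall fun w => trailingDensity_of_notMem M b fun hw => ?_)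
  rcases hy with hy | ⟨i, hi⟩
  · exact hy.not_ge ((trailingCone_subset_singularValueCone a hw).2 0)
  · exact hi.not_ge (hw.2.2 i)

theorem map_leading_polynomialGaussianMeasure (M : ℕ) {b c : ℝ} (hb : 0 < b) (hc : 0 ≤ c) :
    (polynomialGaussianMeasure (singularValueCone (k + (q + 1)))
        (C c * svdJacobian ℝ M (k + (q + 1))) b).map
        (fun x => (x ∘ Fin.castAdd (q + 1), x (Fin.natAdd k 0))) =
      ((polynomialGaussianMeasure (singularValueCone k) (C c * svdJacobian ℝ M k) b).prod
        volume).withDensity fun z => ENNReal.ofReal (nextSingularValueDensity M b q z.1 z.2) := by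
  have hcone (p : ℕ) := (isClosed_singularValueCone p).measurableSet
  have hnonneg (p : ℕ) (x : Fin p → ℝ) :
      0 ≤ polynomialGaussianDensity (singularValueCone p) (C c * svdJacobian ℝ M p) b x :=
    polynomialGaussianDensity_nonneg
      (fun x hx => by simpa using mul_nonneg hc (eval_svdJacobian_nonneg M hx)) b x
  have hmeas (p : ℕ) := measurable_polynomialGaussianDensity (hcone p) (C c * svdJacobian ℝ M p) b
  have hΦ := measurePreserving_append_vecCons k q
  set Φ := fun z : ((Fin k → ℝ) × ℝ) × (Fin q → ℝ) => Fin.append z.1.1 (vecCons z.1.2 z.2)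
  have hfst : (fun x => (x ∘ Fin.castAdd (q + 1), x (Fin.natAdd k 0))) ∘ Φ = Prod.fst := by
    ext z <;> simp [Φ]
  have hfactor (z : (Fin k → ℝ) × ℝ) (w : Fin q → ℝ) :
      polynomialGaussianDensity (singularValueCone (k + (q + 1)))
          (C c * svdJacobian ℝ M (k + (q + 1))) b (Φ (z, w)) =
        polynomialGaussianDensity (singularValueCone k) (C c * svdJacobian ℝ M k) b z.1 *
          trailingDensity M b z.1 (vecCons z.2 w) := by
    simp only [Φ, polynomialGaussianDensity_C_mul, polynomialGaussianDensity_append, mul_assoc]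
  rw [polynomialGaussianMeasure, ← map_withDensity_comp hΦ (hmeas _).ennreal_ofReal,
    Measure.map_map (by fun_prop) hΦ.measurable, hfst, Function.comp_def]
  refine (map_fst_withDensity_ofReal ((hmeas _).comp hΦ.measurable) (fun z => hnonneg _ _)
    (hΦ.integrable_comp_of_integrable (integrable_polynomialGaussianDensity hb (hcone _) _))).trans
    ?_
  simp only [Function.comp_apply, hfactor, integral_const_mul, ENNReal.ofReal_mul (hnonneg k _)]
  rw [polynomialGaussianMeasure, prod_withDensity_left (hmeas k).ennreal_ofReal]
  exact withDensity_mul _ ((hmeas k).ennreal_ofReal.comp measurable_fst)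
    (measurable_nextSingularValueDensity M b).ennreal_ofReal

end NextSingularValue

section Statistic

variable {k q : ℕ}

theorem hasLaw_survival_nextSingularValueDensity (M : ℕ) {b c : ℝ} (hb : 0 < b) (hc : 0 ≤ c)
    {Ω : Type*} [MeasurableSpace Ω] {P : Measure Ω} [IsProbabilityMeasure P]
    {d : Ω → Fin (k + (q + 1)) → ℝ}
    (hd : HasLaw d (polynomialGaussianMeasure (singularValueCone (k + (q + 1)))
      (C c * svdJacobian ℝ M (k + (q + 1))) b) P) :
    HasLaw (fun ω =>
      (∫ y in Set.Ioi (d ω (Fin.natAdd k 0)),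
        nextSingularValueDensity M b q (d ω ∘ Fin.castAdd (q + 1)) y) /
      ∫ y, nextSingularValueDensity M b q (d ω ∘ Fin.castAdd (q + 1)) y)
      (volume.restrict (Set.Ioo 0 1)) P := by
  have hleading := HasLaw.comp ⟨by fun_prop, map_leading_polynomialGaussianMeasure M hb hc⟩ hd
  have := isFiniteMeasure_polynomialGaussianMeasure hb
    (isClosed_singularValueCone k).measurableSet (C c * svdJacobian ℝ M k)
  have := hleading.isProbabilityMeasure_iff.mp inferInstance
  exact (hasLaw_setIntegral_Ioi_div_integral _
    (f := fun z => nextSingularValueDensity M b q z.1 z.2)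
    (measurable_nextSingularValueDensity M b) (fun z => nextSingularValueDensity_nonneg M b z.1 z.2)
    fun a => integrable_nextSingularValueDensity M hb a).comp hleading

theorem setIntegral_nextSingularValueDensity (M : ℕ) (b : ℝ) (x : Fin (k + (q + 1)) → ℝ) (t : ℝ) :
    ∫ y in {y | t < y ∧ ∀ j : Fin (k + (q + 1)), (j : ℕ) < k → y < x j},
        nextSingularValueDensity M b q (x ∘ Fin.castAdd (q + 1)) y =
      ∫ y in Set.Ioi t, nextSingularValueDensity M b q (x ∘ Fin.castAdd (q + 1)) y := by
  refine (setIntegral_eq_of_subset_of_ae_sdiff_eq_zero measurableSet_Ioi.nullMeasurableSet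
    (fun y hy => hy.1) ?_).symm
  filter_upwards [ae_all_iff.mpr fun j => Measure.ae_ne volume (x j)] with y hne ⟨hty, hy⟩
  obtain ⟨j, hj, hjy⟩ : ∃ j : Fin (k + (q + 1)), (j : ℕ) < k ∧ x j ≤ y := by
    by_contra! h
    exact hy ⟨hty, h⟩
  exact nextSingularValueDensity_eq_zero M b (.inr ⟨⟨j, hj⟩, hjy.lt_of_ne (hne j).symm⟩)

theorem setIntegral_Ioi_zero_nextSingularValueDensity (M : ℕ) (b : ℝ) (a : Fin k → ℝ) :
    ∫ y in Set.Ioi 0, nextSingularValueDensity M b q a y =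
      ∫ y, nextSingularValueDensity M b q a y := by
  refine setIntegral_eq_integral_of_ae_compl_eq_zero ?_
  filter_upwards [Measure.ae_ne volume (0 : ℝ)] with y hy0 hy
  exact nextSingularValueDensity_eq_zero M b (.inl ((not_lt.mp hy).lt_of_ne hy0))

end Statistic

end Icsv

theorem icsv_statistic_uniform_general
    (N p : ℕ) (hNp : p < N)
    (σ : ℝ) (hσ : 0 < σ)
    (B : Matrix (Fin N) (Fin p) ℝ)
    (k : ℕ) (hk : k < p)
    {Ω : Type*} [MeasurableSpace Ω] (P : Measure Ω)
    (Y U : Ω → Fin N → Fin p → ℝ) (V : Ω → Fin p → Fin p → ℝ) (d : Ω → Fin p → ℝ)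
    (hYm : Measurable Y) (hdm : Measurable d)
    (hlaw : Measure.map Y P =
      Measure.pi (fun i => Measure.pi (fun j =>
        gaussianReal (B i j) ⟨σ ^ 2, sq_nonneg σ⟩)))
    (hSVD : ∀ ω, of (Y ω) =
      of (U ω) * diagonal (d ω) * (of (V ω))ᵀ)
    (hUorth : ∀ ω, (of (U ω))ᵀ * of (U ω) = 1)
    (hVorth : ∀ ω, (of (V ω))ᵀ * of (V ω) = 1)
    (hanti : ∀ ω, Antitone (d ω))
    (hnonneg : ∀ ω i, 0 ≤ d ω i)
    (hnull : ∀ᵐ ω ∂P,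
      (of (U ω) * diagonal (fun j : Fin p => if k ≤ (j : ℕ) then (1:ℝ) else 0) *
          (of (U ω))ᵀ) * B *
        (of (V ω) * diagonal (fun j : Fin p => if k ≤ (j : ℕ) then (1:ℝ) else 0) *
          (of (V ω))ᵀ) = 0)
    (g : (Fin k → ℝ) → ℝ → ℝ)
    (hg : ∀ (a : Fin k → ℝ) (y : ℝ), g a y =
      ∫ w : Fin (p - k - 1) → ℝ,
        (∏ i : Fin (p - k - 1 + 1),
            Real.exp (-(vecCons y w i) ^ 2 / (2 * σ ^ 2)) *
              vecCons y w i ^ (N - p)) *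
        (∏ i : Fin (p - k - 1 + 1), ∏ j ∈ Finset.Ioi i,
            (vecCons y w i ^ 2 - vecCons y w j ^ 2)) *
        (∏ i : Fin k, ∏ j : Fin (p - k - 1 + 1), (a i ^ 2 - vecCons y w j ^ 2)) *
        Set.indicator {v : Fin (p - k - 1 + 1) → ℝ |
            Antitone v ∧ 0 ≤ v (Fin.last (p - k - 1)) ∧ ∀ i : Fin k, v 0 ≤ a i}
          (fun _ => (1 : ℝ)) (vecCons y w)) :
    Measure.map (fun ω =>
      (∫ y in {y : ℝ | d ω ⟨k, hk⟩ < y ∧ ∀ j : Fin p, (j : ℕ) < k → y < d ω j},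
        g (fun i : Fin k => d ω (Fin.castLE (by omega) i)) y) /
      (∫ y in {y : ℝ | 0 < y ∧ ∀ j : Fin p, (j : ℕ) < k → y < d ω j},
        g (fun i : Fin k => d ω (Fin.castLE (by omega) i)) y)) P
      = volume.restrict (Set.Ioo (0 : ℝ) 1) := by
  obtain ⟨v, hσv, hY⟩ : ∃ v : NNReal, σ ^ 2 = v ∧
      HasLaw Y (Measure.pi fun i => Measure.pi fun j => gaussianReal (B i j) v) P :=
    ⟨⟨σ ^ 2, sq_nonneg σ⟩, rfl, hYm.aemeasurable, hlaw⟩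
  have hv : v ≠ 0 := NNReal.coe_ne_zero.mp (hσv ▸ (pow_pos hσ 2).ne')
  have hordered (ω) : Icsv.IsOrderedSVD (of (Y ω)) (of (U ω)) (d ω) (of (V ω)) :=
    ⟨hUorth ω, hVorth ω, ⟨hanti ω, hnonneg ω⟩, hSVD ω⟩
  obtain rfl : B = 0 := Icsv.mean_eq_zero_of_trailing_projection_eq_zero
    (by simpa using hNp.le) hv hY hordered hk hnull
  simp only [Matrix.zero_apply] at hY
  have := hY.isProbabilityMeasure
  generalize hq : p - k - 1 = q at hg
  generalize hM : N - p = M at hg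
  obtain rfl : p = k + (q + 1) := by lia
  obtain rfl : N = M + (k + (q + 1)) := by lia
  obtain ⟨c, hc, hd⟩ := Icsv.exists_hasLaw_singularValues (by lia) hv
    (Icsv.hasLaw_uncurry hY) hdm.aemeasurable hordered
  rw [← hσv] at hd
  obtain rfl : g = Icsv.nextSingularValueDensity M (1 / (2 * σ ^ 2)) q := by
    ext a y
    simp only [hg, Icsv.nextSingularValueDensity, Icsv.trailingDensity_eq, Icsv.trailingCone]
  have hsurvival :=
    (Icsv.hasLaw_survival_nextSingularValueDensity M (by positivity) hc.le hd).map_eq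
  simp only [← Icsv.setIntegral_Ioi_zero_nextSingularValueDensity,
    ← Icsv.setIntegral_nextSingularValueDensity] at hsurvival
  exact hsurvival

/-- **Integrated Conditional Singular Value test (Theorem 2.2).**
Model: `Y = B + E ∈ ℝ^{N×p}` (`N > p ≥ 1`) with i.i.d. `N(0,σ²)` noise entries; `Y = U D Vᵀ`
a measurably chosen SVD with decreasing nonnegative singular values `d`.  Fix a zero-based
index `k` with `k + 1 < p` (one-based `k+1 ∈ {1,…,p-1}`).  Let
`g a y = ∫⋯∫ [∏_{i=k}^{p} e^{-y_i²/(2σ²)} y_i^{N-p}] [∏_{k≤i<j≤p}(y_i²-y_j²)]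
        [∏_{i<k} ∏_j (a_i² - y_j²)] 1{0 ≤ y_p ≤ ⋯ ≤ y_k ≤ d_{k-1}} dy_{k+1}⋯dy_p`
(`ys = vecCons y w`; upper bound `ys 0 ≤ a i` for all `i` encodes `y_k ≤ d_{k-1}`, vacuous
for `k = 0`, i.e. `d₀ = ∞`).  Under the null hypothesis
`U^{-(k)} (U^{-(k)})ᵀ B V^{-(k)} (V^{-(k)})ᵀ = 0` a.s. (mask `if k ≤ j then 1 else 0`
selecting the last `p - k` columns), the statistic
`V_{k,0} = (∫_{d_k}^{d_{k-1}} g(y; d_0,…,d_{k-1}) dy) / (∫_0^{d_{k-1}} g(y; d_0,…,d_{k-1}) dy)`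
is uniform on `(0,1)`.  The upper limit `d_{k-1}` is encoded by `∀ j < k, y < d j`. -/
theorem icsv_statistic_uniform
    (N p : ℕ) (hNp : p < N) (hp : 1 ≤ p)
    (σ : ℝ) (hσ : 0 < σ)
    (B : Matrix (Fin N) (Fin p) ℝ)
    (k : ℕ) (hk : k + 1 < p)
    {Ω : Type} [MeasurableSpace Ω] (P : Measure Ω) [IsProbabilityMeasure P]
    (Y U : Ω → Fin N → Fin p → ℝ) (V : Ω → Fin p → Fin p → ℝ) (d : Ω → Fin p → ℝ)
    (hYm : Measurable Y) (hUm : Measurable U) (hVm : Measurable V) (hdm : Measurable d)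
    (hlaw : Measure.map Y P =
      Measure.pi (fun i : Fin N => Measure.pi (fun j : Fin p =>
        gaussianReal (B i j) ⟨σ ^ 2, sq_nonneg σ⟩)))
    (hSVD : ∀ ω, Matrix.of (Y ω) =
      Matrix.of (U ω) * Matrix.diagonal (d ω) * (Matrix.of (V ω))ᵀ)
    (hUorth : ∀ ω, (Matrix.of (U ω))ᵀ * Matrix.of (U ω) = 1)
    (hVorth : ∀ ω, (Matrix.of (V ω))ᵀ * Matrix.of (V ω) = 1)
    (hanti : ∀ ω, Antitone (d ω))
    (hnonneg : ∀ ω i, 0 ≤ d ω i)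
    (hnull : ∀ᵐ ω ∂P,
      (Matrix.of (U ω) * Matrix.diagonal (fun j : Fin p => if k ≤ (j : ℕ) then (1:ℝ) else 0) *
          (Matrix.of (U ω))ᵀ) * B *
        (Matrix.of (V ω) * Matrix.diagonal (fun j : Fin p => if k ≤ (j : ℕ) then (1:ℝ) else 0) *
          (Matrix.of (V ω))ᵀ) = 0)
    (g : (Fin k → ℝ) → ℝ → ℝ)
    (hg : ∀ (a : Fin k → ℝ) (y : ℝ), g a y =
      ∫ w : Fin (p - k - 1) → ℝ,
        (∏ i : Fin (p - k - 1 + 1),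
            Real.exp (-(Matrix.vecCons y w i) ^ 2 / (2 * σ ^ 2)) *
              Matrix.vecCons y w i ^ (N - p)) *
        (∏ i : Fin (p - k - 1 + 1), ∏ j ∈ Finset.Ioi i,
            (Matrix.vecCons y w i ^ 2 - Matrix.vecCons y w j ^ 2)) *
        (∏ i : Fin k, ∏ j : Fin (p - k - 1 + 1), (a i ^ 2 - Matrix.vecCons y w j ^ 2)) *
        Set.indicator {v : Fin (p - k - 1 + 1) → ℝ |
            Antitone v ∧ 0 ≤ v (Fin.last (p - k - 1)) ∧ ∀ i : Fin k, v 0 ≤ a i}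
          (fun _ => (1 : ℝ)) (Matrix.vecCons y w)) :
    Measure.map (fun ω =>
      (∫ y in {y : ℝ | d ω ⟨k, by omega⟩ < y ∧ ∀ j : Fin p, (j : ℕ) < k → y < d ω j},
        g (fun i : Fin k => d ω (Fin.castLE (by omega) i)) y) /
      (∫ y in {y : ℝ | 0 < y ∧ ∀ j : Fin p, (j : ℕ) < k → y < d ω j},
        g (fun i : Fin k => d ω (Fin.castLE (by omega) i)) y)) P
      = volume.restrict (Set.Ioo (0 : ℝ) 1) :=
  icsv_statistic_uniform_general N p hNp σ hσ B k (Nat.lt_of_succ_lt hk) P Y U V d hYm hdm hlaw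
    hSVD hUorth hVorth hanti hnonneg hnull g hg
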